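/- arXiv:2503.04699 — 4 statements merged into one kernel-verified Lean document; each statement's English description precedes it below -/
import Mathlib

section
/- Let k be a field, R a commutative k-algebra, and f, g ∈ R. Consider the Koszul complex R → R × R → R with maps h_X : u ↦ (f·u, −g·u) and h_Z† : (u, v) ↦ g·u + f·v, so that h_Z† ∘ h_X = 0. Then the first homology H := (LinearMap.ker h_Z†) ⧸ (range h_X, viewed as a submodule of ker h_Z†) is isomorphic as a k-vector space to the direct sum (Ann_R(f) ⧸ g·Ann_R(f)) × Ann_{R/(f)}(g), where Ann_R(f) = {r ∈ R : r·f = 0}, g·Ann_R(f) is the image of Ann_R(f) under multiplication by g, and Ann_{R/(f)}(g) = {u ∈ R ⧸ Ideal.span {f} : u · (class of g) = 0}. -/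
noncomputable section

variable (k : Type) [Field k] (R : Type) [CommRing R] [Algebra k R] (f g : R)

/-- The Koszul map `h_X : R → R × R`, `u ↦ (f·u, −g·u)`. -/
def hX : R →ₗ[k] R × R :=
  (LinearMap.mulLeft k f).prod (-(LinearMap.mulLeft k g))

/-- The Koszul map `h_Z† : R × R → R`, `(u, v) ↦ g·u + f·v`. -/
def hZdag : R × R →ₗ[k] R :=
  (LinearMap.mulLeft k g).coprod (LinearMap.mulLeft k f)

/-- The annihilator `Ann_R(f) = {r : r·f = 0}` as a `k`-submodule of `R`. -/
def annF : Submodule k R := LinearMap.ker (LinearMap.mulRight k f)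

/-- The image `g·Ann_R(f)` of `Ann_R(f)` under multiplication by `g`. -/
def gAnnF : Submodule k R := (annF k R f).map (LinearMap.mulLeft k g)

/-- The annihilator of the class of `g` in the quotient ring `R ⧸ (f)`. -/
def annQg : Submodule k (R ⧸ Ideal.span ({f} : Set R)) :=
  LinearMap.ker (LinearMap.mulRight k (Ideal.Quotient.mk (Ideal.span ({f} : Set R)) g))

/-!
The Koszul complex of `(f, g)` is the total complex of the square with horizontal maps
multiplication by `f` and vertical maps multiplication by `g`. For the total complex
`A₀ → B₀ × A₁ → B₁` of any commutative square with horizontal maps `φ₀ : A₀ → B₀` and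
`φ₁ : A₁ → B₁`, the maps `a₁ ↦ (0, a₁)` and `(b, a₁) ↦ [b]` give a short exact sequence from the
cokernel of `ker φ₀ → ker φ₁` through the first homology to the kernel of `coker φ₀ → coker φ₁`.
It splits over a field.
-/

section Splitting

variable {S M N P : Type*} [Ring S] [AddCommGroup M] [Module S M] [AddCommGroup N] [Module S N]
  [AddCommGroup P] [Module S P]

theorem nonempty_linearEquiv_prod_of_exact [Module.Projective S P] {j : M →ₗ[S] N} {q : N →ₗ[S] P}
    (hjq : Function.Exact j q) (hj : Function.Injective j) (hq : Function.Surjective q) :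
    Nonempty (N ≃ₗ[S] M × P) := by
  obtain ⟨s, hs⟩ := Module.projective_lifting_property q LinearMap.id hq
  exact ⟨(hjq.splitSurjectiveEquiv hj ⟨s, hs⟩).1⟩

theorem nonempty_quotient_linearEquiv_prod [Module.Projective S P] {i : M →ₗ[S] N} {p : N →ₗ[S] P}
    {L : Submodule S N} (hp : Function.Surjective p)
    (hker : LinearMap.ker p = LinearMap.range i ⊔ L) :
    Nonempty ((N ⧸ L) ≃ₗ[S] (M ⧸ L.comap i) × P) := by
  have hL : L ≤ LinearMap.ker p := hker ▸ le_sup_right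
  refine nonempty_linearEquiv_prod_of_exact (j := (L.comap i).mapQ L i le_rfl)
    (q := L.liftQ p hL) ?exactness ?injective ?surjective
  case exactness =>
    rw [LinearMap.exact_iff, Submodule.ker_liftQ, Submodule.range_mapQ, hker, Submodule.map_sup,
      Submodule.mkQ_map_self, sup_bot_eq]
  case injective =>
    rw [← LinearMap.ker_eq_bot, Submodule.ker_mapQ, Submodule.mkQ_map_self]
  case surjective =>
    rwa [← LinearMap.range_eq_top, Submodule.range_liftQ, LinearMap.range_eq_top]

end Splitting

section CommSquare

variable {S A₀ B₀ A₁ B₁ Q₀ Q₁ : Type*} [Ring S]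
  [AddCommGroup A₀] [Module S A₀] [AddCommGroup B₀] [Module S B₀]
  [AddCommGroup A₁] [Module S A₁] [AddCommGroup B₁] [Module S B₁]
  [AddCommGroup Q₀] [Module S Q₀] [AddCommGroup Q₁] [Module S Q₁]
  {φ₀ : A₀ →ₗ[S] B₀} {φ₁ : A₁ →ₗ[S] B₁} {α : A₀ →ₗ[S] A₁} {β : B₀ →ₗ[S] B₁}
  {π₀ : B₀ →ₗ[S] Q₀} {π₁ : B₁ →ₗ[S] Q₁} {γ : Q₀ →ₗ[S] Q₁}

/-- The 1-cycles of the total complex `A₀ → B₀ × A₁ → B₁` of a square with horizontal maps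
`φ₀ : A₀ → B₀`, `φ₁ : A₁ → B₁` and vertical maps `α : A₀ → A₁`, `β : B₀ → B₁`. -/
abbrev totalCycles (φ₁ : A₁ →ₗ[S] B₁) (β : B₀ →ₗ[S] B₁) : Submodule S (B₀ × A₁) :=
  LinearMap.ker (β.coprod φ₁)

/-- The 1-boundaries of the same total complex, as a submodule of the 1-cycles. The sign sits on
the vertical map `α`. In a square that does not commute, only those `(φ₀ a, -α a)` that happen to be
cycles are kept. -/
abbrev totalBoundaries (φ₀ : A₀ →ₗ[S] B₀) (φ₁ : A₁ →ₗ[S] B₁) (α : A₀ →ₗ[S] A₁) (β : B₀ →ₗ[S] B₁) :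
    Submodule S (totalCycles φ₁ β) :=
  (LinearMap.range (φ₀.prod (-α))).comap (totalCycles φ₁ β).subtype

/-- The map `a₁ ↦ (0, a₁)` from `ker φ₁` to the 1-cycles. -/
def kerToTotalCycles (φ₁ : A₁ →ₗ[S] B₁) (β : B₀ →ₗ[S] B₁) :
    LinearMap.ker φ₁ →ₗ[S] totalCycles φ₁ β :=
  (LinearMap.inr S B₀ A₁).restrict fun a₁ ha₁ => by simpa using ha₁

/-- The map `(b, a₁) ↦ π₀ b` from the 1-cycles to `ker γ`, where `γ : Q₀ → Q₁` is induced by `β`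
on the cokernels `π₀ : B₀ → Q₀` of `φ₀` and `π₁ : B₁ → Q₁` of `φ₁`. -/
def totalCyclesToKer (hπ₁ : Function.Exact φ₁ π₁) (hγ : γ ∘ₗ π₀ = π₁ ∘ₗ β) :
    totalCycles φ₁ β →ₗ[S] LinearMap.ker γ :=
  (π₀ ∘ₗ LinearMap.fst S B₀ A₁).restrict fun x hx => by
    have hcycle : β x.1 + φ₁ x.2 = 0 := hx
    calc γ (π₀ x.1) = π₁ (β x.1) := LinearMap.congr_fun hγ x.1
      _ = π₁ (φ₁ (-x.2)) := by rw [map_neg, eq_neg_of_add_eq_zero_left hcycle]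
      _ = 0 := hπ₁.apply_apply_eq_zero _

theorem totalCyclesToKer_surjective (hπ₀_surj : Function.Surjective π₀)
    (hπ₁ : Function.Exact φ₁ π₁) (hγ : γ ∘ₗ π₀ = π₁ ∘ₗ β) :
    Function.Surjective (totalCyclesToKer hπ₁ hγ) := by
  rintro ⟨q, hq⟩
  obtain ⟨b, rfl⟩ := hπ₀_surj q
  have hb : π₁ (β b) = 0 := (LinearMap.congr_fun hγ b).symm.trans hq
  obtain ⟨a₁, ha₁⟩ := (hπ₁ _).1 hb
  exact ⟨⟨(b, -a₁), by simp [ha₁]⟩, rfl⟩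

theorem comap_kerToTotalCycles_totalBoundaries (φ₀ : A₀ →ₗ[S] B₀) (φ₁ : A₁ →ₗ[S] B₁)
    (α : A₀ →ₗ[S] A₁) (β : B₀ →ₗ[S] B₁) :
    (totalBoundaries φ₀ φ₁ α β).comap (kerToTotalCycles φ₁ β) =
      ((LinearMap.ker φ₀).map α).comap (LinearMap.ker φ₁).subtype := by
  ext a₁
  change (∃ a, (φ₀ a, -α a) = (0, (a₁ : A₁))) ↔ ∃ a, φ₀ a = 0 ∧ α a = a₁
  rw [← (Equiv.neg A₀).exists_congr_right]
  simp [Prod.ext_iff]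

theorem ker_totalCyclesToKer (hcomm : β ∘ₗ φ₀ = φ₁ ∘ₗ α) (hπ₀ : Function.Exact φ₀ π₀)
    (hπ₁ : Function.Exact φ₁ π₁) (hγ : γ ∘ₗ π₀ = π₁ ∘ₗ β) :
    LinearMap.ker (totalCyclesToKer hπ₁ hγ) =
      LinearMap.range (kerToTotalCycles φ₁ β) ⊔ totalBoundaries φ₀ φ₁ α β := by
  apply le_antisymm
  · rintro ⟨⟨b, a₁⟩, hcycle⟩ hx
    obtain ⟨a, rfl⟩ := (hπ₀ b).1 (congrArg Subtype.val hx)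
    have hmem : α a + a₁ ∈ LinearMap.ker φ₁ := by
      have hcomm_a : β (φ₀ a) = φ₁ (α a) := LinearMap.congr_fun hcomm a
      rw [LinearMap.mem_ker, map_add, ← hcomm_a]
      exact hcycle
    have hboundary : (φ₀ a, -α a) ∈ totalCycles φ₁ β := by
      simpa [add_neg_eq_zero] using LinearMap.congr_fun hcomm a
    refine Submodule.mem_sup.2 ⟨_, ⟨⟨_, hmem⟩, rfl⟩, ⟨_, hboundary⟩, ⟨a, rfl⟩, ?_⟩
    ext <;> simp [kerToTotalCycles]
  · refine sup_le ?_ ?_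
    · rintro _ ⟨a₁, rfl⟩
      exact Subtype.ext (map_zero π₀)
    · rintro ⟨_, _⟩ ⟨a, rfl⟩
      exact Subtype.ext (hπ₀.apply_apply_eq_zero a)

theorem nonempty_totalHomology_linearEquiv_prod [Module.Projective S (LinearMap.ker γ)]
    (hcomm : β ∘ₗ φ₀ = φ₁ ∘ₗ α) (hπ₀_surj : Function.Surjective π₀) (hπ₀ : Function.Exact φ₀ π₀)
    (hπ₁ : Function.Exact φ₁ π₁) (hγ : γ ∘ₗ π₀ = π₁ ∘ₗ β) :
    Nonempty ((totalCycles φ₁ β ⧸ totalBoundaries φ₀ φ₁ α β) ≃ₗ[S]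
      (LinearMap.ker φ₁ ⧸ ((LinearMap.ker φ₀).map α).comap (LinearMap.ker φ₁).subtype) ×
        LinearMap.ker γ) := by
  rw [← comap_kerToTotalCycles_totalBoundaries φ₀ φ₁ α β]
  exact nonempty_quotient_linearEquiv_prod (totalCyclesToKer_surjective hπ₀_surj hπ₁ hγ)
    (ker_totalCyclesToKer hcomm hπ₀ hπ₁ hγ)

end CommSquare

theorem exact_mulLeft_quotientMk_span_singleton {S C : Type*} [CommSemiring S]
    [CommRing C] [Algebra S C] (c : C) :
    Function.Exact (LinearMap.mulLeft S c)
      (Ideal.Quotient.mkₐ S (Ideal.span {c})).toLinearMap := by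
  intro x
  change Ideal.Quotient.mk _ x = 0 ↔ ∃ y, c * y = x
  rw [Ideal.Quotient.eq_zero_iff_dvd]
  exact exists_congr fun _ => eq_comm

/-- The first homology of the Koszul complex `R → R × R → R` (kernel of `h_Z†` modulo range
of `h_X`) is isomorphic as a `k`-vector space to
`(Ann_R(f) ⧸ g·Ann_R(f)) × Ann_{R/(f)}(g)`. -/
theorem koszul_first_homology :
    Nonempty (
      ((LinearMap.ker (hZdag k R f g)) ⧸
        ((LinearMap.range (hX k R f g)).comap (LinearMap.ker (hZdag k R f g)).subtype))
      ≃ₗ[k]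
      (((annF k R f) ⧸ ((gAnnF k R f g).comap (annF k R f).subtype)) × (annQg k R f g))) := by
  have hexact := exact_mulLeft_quotientMk_span_singleton (S := k) f
  have hf : LinearMap.mulRight k f = LinearMap.mulLeft k f :=
    LinearMap.ext fun r => mul_comm r f
  unfold hX hZdag gAnnF annF annQg
  rw [hf]
  refine nonempty_totalHomology_linearEquiv_prod ?_ (Ideal.Quotient.mkₐ_surjective k _) hexact
    hexact ?_
  · ext r
    exact mul_left_comm g f r
  · ext r
    exact (mul_comm _ _).trans (map_mul (Ideal.Quotient.mk (Ideal.span {f})) g r).symm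
end
end

section
/- Let α, β, a, b be integers with α ≥ 1, β ≥ 1, a ≥ 0, b ≥ 0 and a·b > (α + 1)·(β + 1). Then the topological index of the BB(ᾱ, β̄, a, b) code, with f = 1 + x + x^{-α} y^{b} and g = 1 + y + y^{-β} x^{a} in R, is Q = dim_{F₂} R ⧸ (f, g) = a·b − α·β. -/
noncomputable section

/-- The Laurent polynomial ring `F₂[x^±, y^±]` as a group algebra. -/
abbrev LaurentR : Type := AddMonoidAlgebra (ZMod 2) (ℤ × ℤ)

/-- The monomial `x^i y^j`. -/
def mono (i j : ℤ) : LaurentR := AddMonoidAlgebra.single (i, j) 1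

/-- The BB polynomial `f = 1 + x + x^{-α} y^{b}`. -/
def fBB (α b : ℤ) : LaurentR := 1 + mono 1 0 + mono (-α) b

/-- The BB polynomial `g = 1 + y + y^{-β} x^{a}`. -/
def gBB (β a : ℤ) : LaurentR := 1 + mono 0 1 + mono a (-β)

/-!
Multiplying `f` by `x^α` and `g` by `y^β` turns the quotient into the coordinate ring of the common
zeros, off the axes, of the plane curves `F = x^α + x^(α+1) + y^b` and `G = y^β + y^(β+1) + x^a`.
The inequality `(α + 1)(β + 1) < ab` says exactly that `x` and `y` can be given positive weights
making `x^(α+1)` lighter than `y^b` and `y^(β+1)` lighter than `x^a`. The heaviest terms of `F` and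
`G` are then `y^b` and `x^a`, so the curves meet `ab` times in the plane, while the lightest terms
are `x^α` and `y^β`, so they meet `αβ` times at the origin. The origin is the only common zero on
the axes, so inverting `xy` removes precisely these `αβ` intersections.

Both counts are one division argument: since the initial exponents `u` and `v` of `F` and `G` are
coprime, cancellation among the lightest terms of `p F + q G` comes only from the Koszul syzygy, and
the monomials divisible by neither `x^u` nor `x^v` form a basis of the quotient. The count at the
origin is the one for the ideal `(F, G, (xy)^N)` with `N` large.
-/

open AddMonoidAlgebra Filter

section WeightFiltration

variable {k Γ : Type*} [Semiring k] [AddMonoid Γ] {w : Γ →+ ℤ} {M N : ℤ} {n : Γ} {s t : k[Γ]}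

variable (k) in
/-- The step `M` of the descending filtration of `k[Γ]` by weight: the elements all of whose
exponents have weight at least `M`. -/
def weightGE (w : Γ →+ ℤ) (M : ℤ) : Submodule k k[Γ] :=
  supported k k {n | M ≤ w n}

theorem mem_weightGE : s ∈ weightGE k w M ↔ ∀ n, w n < M → s.coeff n = 0 := by
  simp [weightGE, mem_supported']

theorem single_mem_weightGE {c : k} (h : M ≤ w n) : single n c ∈ weightGE k w M := by
  refine mem_weightGE.2 fun m hm => ?_
  rw [coeff_single, Finsupp.single_eq_of_ne]
  rintro rfl
  omega

theorem weightGE_anti (h : M ≤ N) : weightGE k w N ≤ weightGE k w M :=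
  supported_mono fun _ hn => h.trans hn

theorem weightGE_le_iff {W : Submodule k k[Γ]} :
    weightGE k w M ≤ W ↔ ∀ n, M ≤ w n → single n 1 ∈ W := by
  simp [weightGE, supported_eq_span_single, Submodule.span_le, Set.subset_def]

theorem mul_mem_weightGE (hs : s ∈ weightGE k w M) (ht : t ∈ weightGE k w N) :
    s * t ∈ weightGE k w (M + N) := by
  classical
  intro n hn
  obtain ⟨i, hi, j, hj, rfl⟩ := Finset.mem_add.1 (support_coeff_mul_subset s t hn)
  simpa using add_le_add (hs hi) (ht hj)

theorem exists_mem_weightGE (w : Γ →+ ℤ) (s : k[Γ]) : ∃ M, s ∈ weightGE k w M := by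
  induction s using AddMonoidAlgebra.induction_linear with
  | zero => exact ⟨0, zero_mem _⟩
  | add s t hs ht =>
    obtain ⟨M, hM⟩ := hs
    obtain ⟨N, hN⟩ := ht
    exact ⟨min M N, add_mem (weightGE_anti (min_le_left _ _) hM)
      (weightGE_anti (min_le_right _ _) hN)⟩
  | single n c => exact ⟨w n, single_mem_weightGE le_rfl⟩

theorem weightGE_neg_one_eq_bot (hw : ∀ n, 0 ≤ w n) : weightGE k (-w) 1 = ⊥ := by
  refine (Submodule.eq_bot_iff _).2 fun s hs => ?_
  ext n
  exact mem_weightGE.1 hs n (by rw [AddMonoidHom.neg_apply]; linarith [hw n])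

end WeightFiltration

section InitialExponent

variable {k Γ : Type*} [CommRing k] [AddCommMonoid Γ]
variable {w : Γ →+ ℤ} {M : ℤ} {u n : Γ} {F s : k[Γ]}

/-- `u` is the initial exponent of `F` for the weight `w`: the coefficient of `F` at `u` is a unit,
and all other exponents of `F` have strictly larger weight. -/
structure HasInitialExponent (w : Γ →+ ℤ) (u : Γ) (F : k[Γ]) : Prop where
  isUnit_coeff : IsUnit (F.coeff u)
  sub_mem : F - single u (F.coeff u) ∈ weightGE k w (w u + 1)

theorem hasInitialExponent_single_add {c : k} (hc : IsUnit c) (hs : s ∈ weightGE k w (w u + 1)) :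
    HasInitialExponent w u (single u c + s) := by
  have hcoeff : (single u c + s).coeff u = c := by
    simp [mem_weightGE.1 hs u (lt_add_one _)]
  exact ⟨by rwa [hcoeff], by rwa [hcoeff, add_sub_cancel_left]⟩

namespace HasInitialExponent

theorem self_mem (hF : HasInitialExponent w u F) : F ∈ weightGE k w (w u) := by
  rw [← sub_add_cancel F (single u (F.coeff u))]
  exact add_mem (weightGE_anti (by omega) hF.sub_mem) (single_mem_weightGE le_rfl)

theorem coeff_mul (hF : HasInitialExponent w u F) (hs : s ∈ weightGE k w M)
    (hn : w n ≤ M + w u) : (s * F).coeff n = (s * single u (F.coeff u)).coeff n := by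
  have h := mem_weightGE.1 (mul_mem_weightGE hs hF.sub_mem) n (by omega)
  rwa [mul_sub, coeff_sub, Finsupp.sub_apply, sub_eq_zero] at h

theorem coeff_mul_add [IsCancelAdd Γ] (hF : HasInitialExponent w u F) (hs : s ∈ weightGE k w M)
    (hn : w n ≤ M) : (s * F).coeff (n + u) = s.coeff n * F.coeff u := by
  rw [hF.coeff_mul hs (by rw [map_add]; omega), coeff_mul_single_add]

theorem single_add_mem {W : Submodule k k[Γ]} (hF : HasInitialExponent w u F)
    (hFW : ∀ s, s * F ∈ W) (hW : weightGE k w (w (n + u) + 1) ≤ W) : single (n + u) 1 ∈ W := by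
  obtain ⟨c, hc⟩ := hF.isUnit_coeff
  have htail : single n 1 * (F - single u (F.coeff u)) ∈ W :=
    hW (weightGE_anti (by rw [map_add]; omega)
      (mul_mem_weightGE (single_mem_weightGE le_rfl) hF.sub_mem))
  have hinit : single (n + u) (F.coeff u) ∈ W := by
    have := W.sub_mem (hFW (single n 1)) htail
    rwa [← mul_sub, sub_sub_cancel, single_mul_single, one_mul] at this
  simpa [← hc] using W.smul_mem (↑c⁻¹ : k) hinit

end HasInitialExponent

end InitialExponent

section StandardBasis

/-- The staircase below `u` and `v`: the exponents of the monomials divisible by neither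
`x^u` nor `x^v`. -/
def stairs {Γ : Type*} [Preorder Γ] (u v : Γ) : Set Γ := {n | ¬u ≤ n ∧ ¬v ≤ n}

variable {k Γ : Type*} [CommRing k] [AddCommMonoid Γ] [Preorder Γ] [CanonicallyOrderedAdd Γ]
variable {w : Γ →+ ℤ} {M : ℤ} {u v n : Γ} {F G p q s : k[Γ]}

theorem exists_weightGE_le_of_finite_stairs (hfin : (stairs u v).Finite) (w : Γ →+ ℤ)
    {L : Ideal k[Γ]} (hu : single u 1 ∈ L) (hv : single v 1 ∈ L) :
    ∃ M, weightGE k w M ≤ L.restrictScalars k := by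
  obtain ⟨M, hM⟩ := (hfin.image w).bddAbove
  refine ⟨M + 1, weightGE_le_iff.2 fun n hn => ?_⟩
  have hmul : ∀ i, single i 1 ∈ L → i ≤ n → single n 1 ∈ L := fun i hi hin => by
    obtain ⟨m, rfl⟩ := le_iff_exists_add'.1 hin
    simpa [single_mul_single] using L.mul_mem_left (single m 1) hi
  have hstairs : n ∉ stairs u v := fun h => by
    have := hM (Set.mem_image_of_mem w h)
    omega
  rcases not_and_or.1 hstairs with h | h
  · exact hmul u hu (not_not.1 h)
  · exact hmul v hv (not_not.1 h)

namespace HasInitialExponent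

theorem weightGE_le_supported_stairs_sup (hF : HasInitialExponent w u F)
    (hG : HasInitialExponent w v G) {L : Ideal k[Γ]} (hFL : F ∈ L) (hGL : G ∈ L)
    (hM : weightGE k w M ≤ L.restrictScalars k) (d : ℕ) :
    weightGE k w (M - d) ≤ supported k k (stairs u v) ⊔ L.restrictScalars k := by
  induction d with
  | zero => simpa using le_sup_of_le_right hM
  | succ d ih =>
    refine weightGE_le_iff.2 fun n hn => ?_
    have hnd : weightGE k w (w n + 1) ≤ supported k k (stairs u v) ⊔ L.restrictScalars k :=
      (weightGE_anti (by push_cast at hn; omega)).trans ih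
    have hL : ∀ H ∈ L, ∀ s, s * H ∈ supported k k (stairs u v) ⊔ L.restrictScalars k :=
      fun H hH s => Submodule.mem_sup_right (L.mul_mem_left s hH)
    by_cases hu : u ≤ n
    · obtain ⟨m, rfl⟩ := le_iff_exists_add'.1 hu
      exact hF.single_add_mem (hL F hFL) hnd
    by_cases hv : v ≤ n
    · obtain ⟨m, rfl⟩ := le_iff_exists_add'.1 hv
      exact hG.single_add_mem (hL G hGL) hnd
    refine Submodule.mem_sup_left ?_
    rw [supported_eq_span_single]
    exact Submodule.subset_span ⟨n, ⟨hu, hv⟩, rfl⟩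

theorem coeff_mul_eq_zero (hG : HasInitialExponent w v G) (hs : s ∈ weightGE k w M)
    (hn : w n ≤ M + w v) (hvn : ¬v ≤ n) : (s * G).coeff n = 0 := by
  rw [hG.coeff_mul hs hn, coeff_mul_single_of_forall_add_ne]
  rintro d rfl
  exact hvn le_add_self

variable [IsCancelAdd Γ]

theorem exists_sub_mul_mem (hG : HasInitialExponent w v G) (hp : p ∈ weightGE k w M)
    (hpv : ∀ n, w n ≤ M → ¬v ≤ n → p.coeff n = 0) :
    ∃ h ∈ weightGE k w (M - w v), p - h * G ∈ weightGE k w (M + 1) := by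
  obtain ⟨d, hd⟩ := hG.isUnit_coeff
  have hdiv : (↑d⁻¹ : k) • p.divOf v ∈ weightGE k w (M - w v) :=
    Submodule.smul_mem _ _ <| mem_weightGE.2 fun n hn =>
      mem_weightGE.1 hp _ (by rw [map_add]; omega)
  refine ⟨_, hdiv, mem_weightGE.2 fun n hn => ?_⟩
  rw [coeff_sub, Finsupp.sub_apply, sub_eq_zero]
  by_cases hvn : v ≤ n
  · obtain ⟨m, rfl⟩ := le_iff_exists_add'.1 hvn
    rw [hG.coeff_mul_add hdiv (by rw [map_add] at hn; omega), ← hd]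
    simp [add_comm m, mul_right_comm]
  · rw [hpv n (by omega) hvn, hG.coeff_mul_eq_zero hdiv (by omega) hvn]

/-- If the lowest layer of `p * F + q * G` cancels, then so does that of `(p, q)` after adding a
multiple of the Koszul syzygy `(-G, F)`. -/
theorem exists_syzygy_lift (hF : HasInitialExponent w u F) (hG : HasInitialExponent w v G)
    (huv : ∀ n, v ≤ n + u → v ≤ n) (hp : p ∈ weightGE k w (M - w u))
    (hq : q ∈ weightGE k w (M - w v))
    (hpq : ∀ n ∉ stairs u v, w n ≤ M → (p * F + q * G).coeff n = 0) :
    ∃ p' ∈ weightGE k w (M + 1 - w u), ∃ q' ∈ weightGE k w (M + 1 - w v),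
      p' * F + q' * G = p * F + q * G := by
  obtain ⟨h, hh, hph⟩ := hG.exists_sub_mul_mem hp fun n hn hvn => by
    have h0 := hpq (n + u) (fun hs => hs.1 le_add_self) (by rw [map_add]; omega)
    rwa [coeff_add, Finsupp.add_apply, hF.coeff_mul_add hp hn,
      hG.coeff_mul_eq_zero hq (by rw [map_add]; omega) (mt (huv n) hvn), add_zero,
      hF.isUnit_coeff.mul_left_eq_zero] at h0
  rw [sub_add_eq_add_sub] at hph
  have hqh : q + h * F ∈ weightGE k w (M - w v) :=
    add_mem hq (weightGE_anti (by omega) (mul_mem_weightGE hh hF.self_mem))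
  have heq : (p - h * G) * F + (q + h * F) * G = p * F + q * G := by ring
  refine ⟨_, hph, _, mem_weightGE.2 fun n hn => ?_, heq⟩
  have h0 := hpq (n + v) (fun hs => hs.2 le_add_self) (by rw [map_add]; omega)
  rwa [← heq, coeff_add, Finsupp.add_apply,
    mem_weightGE.1 (mul_mem_weightGE hph hF.self_mem) (n + v) (by rw [map_add]; omega),
    hG.coeff_mul_add hqh (by omega), zero_add, hG.isUnit_coeff.mul_left_eq_zero] at h0

theorem mul_add_mul_mem_weightGE (hF : HasInitialExponent w u F) (hG : HasInitialExponent w v G)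
    (huv : ∀ n, v ≤ n + u → v ≤ n)
    (hpq : ∀ n ∉ stairs u v, w n < M → (p * F + q * G).coeff n = 0) :
    p * F + q * G ∈ weightGE k w M := by
  have lift (d : ℕ) : ∀ p q, p ∈ weightGE k w (M - d - w u) → q ∈ weightGE k w (M - d - w v) →
      (∀ n ∉ stairs u v, w n < M → (p * F + q * G).coeff n = 0) →
      p * F + q * G ∈ weightGE k w M := by
    induction d with
    | zero =>
      intro p q hp hq _
      exact add_mem (weightGE_anti (by simp) (mul_mem_weightGE hp hF.self_mem))
        (weightGE_anti (by simp) (mul_mem_weightGE hq hG.self_mem))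
    | succ d ih =>
      intro p q hp hq hpq
      obtain ⟨p', hp', q', hq', heq⟩ :=
        hF.exists_syzygy_lift hG huv hp hq fun n hn hnM => hpq n hn (by push_cast at hnM; omega)
      rw [← heq] at hpq ⊢
      exact ih p' q' (weightGE_anti (by push_cast; omega) hp')
        (weightGE_anti (by push_cast; omega) hq') hpq
  obtain ⟨P, hP⟩ := exists_mem_weightGE w p
  obtain ⟨Q, hQ⟩ := exists_mem_weightGE w q
  exact lift (max (M - w u - P) (M - w v - Q)).toNat p q (weightGE_anti (by omega) hP)
    (weightGE_anti (by omega) hQ) hpq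

/-- `L` may exceed `(F, G)` in weights above the staircase, which adapts the statement to counting
at a single point: no `weightGE k w N` need be contained in `(F, G)` itself. -/
theorem isCompl_supported_stairs (hF : HasInitialExponent w u F) (hG : HasInitialExponent w v G)
    (huv : ∀ n, v ≤ n + u → v ≤ n) {L : Ideal k[Γ]} (hFL : F ∈ L) (hGL : G ∈ L)
    (hLM : L.restrictScalars k ≤ (Ideal.span {F, G}).restrictScalars k ⊔ weightGE k w M)
    (hM : ∀ n ∈ stairs u v, w n < M) {N : ℤ} (hN : weightGE k w N ≤ L.restrictScalars k) :
    IsCompl (supported k k (stairs u v)) (L.restrictScalars k) := by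
  constructor
  · refine Submodule.disjoint_def.2 fun r hr hrL => ?_
    rw [mem_supported'] at hr
    obtain ⟨s, hs, t, ht, rfl⟩ := Submodule.mem_sup.1 (hLM hrL)
    obtain ⟨p, q, rfl⟩ := Ideal.mem_span_pair.1 hs
    have hpq : p * F + q * G ∈ weightGE k w M :=
      hF.mul_add_mul_mem_weightGE hG huv fun n hn hnM => by
        simpa [mem_weightGE.1 ht n hnM] using hr n hn
    ext n
    by_cases hn : n ∈ stairs u v
    · exact mem_weightGE.1 (add_mem hpq ht) n (hM n hn)
    · exact hr n hn
  · refine codisjoint_iff.2 (eq_top_iff.2 fun s _ => ?_)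
    obtain ⟨P, hP⟩ := exists_mem_weightGE w s
    exact hF.weightGE_le_supported_stairs_sup hG hFL hGL hN (N - P).toNat
      (weightGE_anti (by omega) hP)

theorem nonempty_basis_quotient (hF : HasInitialExponent w u F) (hG : HasInitialExponent w v G)
    (huv : ∀ n, v ≤ n + u → v ≤ n) {L : Ideal k[Γ]} (hFL : F ∈ L) (hGL : G ∈ L)
    (hLM : L.restrictScalars k ≤ (Ideal.span {F, G}).restrictScalars k ⊔ weightGE k w M)
    (hM : ∀ n ∈ stairs u v, w n < M) {N : ℤ} (hN : weightGE k w N ≤ L.restrictScalars k) :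
    Nonempty (Module.Basis (stairs u v) k (k[Γ] ⧸ L)) :=
  ⟨.ofRepr <| (Submodule.Quotient.restrictScalarsEquiv k L).symm ≪≫ₗ
    Submodule.quotientEquivOfIsCompl _ _
      (hF.isCompl_supported_stairs hG huv hFL hGL hLM hM hN).symm ≪≫ₗ supportedEquivFinsupp _⟩

end HasInitialExponent

end StandardBasis

section Localization

variable {k : Type*} [Field k]

theorem eventually_finrank_away_add_finrank_quotient_span_pow {A : Type*} (B : Type*)
    [CommRing A] [CommRing B] [Algebra k A] [Algebra k B] [Algebra A B] [IsScalarTower k A B]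
    [Module.Finite k A] (z : A) [IsLocalization.Away z B] :
    ∀ᶠ N in atTop, Module.finrank k B + Module.finrank k (A ⧸ Ideal.span {z ^ N}) =
      Module.finrank k A := by
  have : IsArtinianRing A := IsArtinianRing.of_finite k A
  let π : A →ₗ[k] B := (IsScalarTower.toAlgHom k A B).toLinearMap
  have hsurj : Function.Surjective π :=
    IsArtinianRing.localization_surjective (Submonoid.powers z) B
  filter_upwards [(LinearMap.mulLeft k z).eventually_iSup_ker_pow_eq] with N hN
  simp only [LinearMap.pow_mulLeft] at hN
  have hker : π.ker = (LinearMap.mulLeft k (z ^ N)).ker := by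
    refine le_antisymm (fun t ht => ?_) (fun t ht => ?_)
    · obtain ⟨⟨_, m, rfl⟩, hm⟩ := (IsLocalization.map_eq_zero_iff (Submonoid.powers z) B t).1 ht
      rw [← hN]
      exact Submodule.mem_iSup_of_mem m hm
    · exact (IsLocalization.map_eq_zero_iff (Submonoid.powers z) B t).2 ⟨⟨_, N, rfl⟩, ht⟩
  have hrange : (LinearMap.mulLeft k (z ^ N)).range =
      (Ideal.span {z ^ N}).restrictScalars k := by
    ext t
    simp [Ideal.mem_span_singleton', mul_comm, eq_comm]
  have hB : Module.finrank k B = Module.finrank k (Ideal.span {z ^ N}) := by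
    have h₁ := π.finrank_range_add_finrank_ker
    have h₂ := (LinearMap.mulLeft k (z ^ N)).finrank_range_add_finrank_ker
    rw [LinearMap.range_eq_top.2 hsurj, finrank_top, hker] at h₁
    rw [hrange] at h₂
    exact add_right_cancel (h₁.trans h₂.symm)
  rw [hB, add_comm]
  exact ((Ideal.span {z ^ N}).restrictScalars k).finrank_quotient_add_finrank

theorem eventually_finrank_quotient_map_add_finrank_quotient_sup {S : Type*} (R : Type*)
    [CommRing S] [CommRing R] [Algebra k S] [Algebra k R] [Algebra S R] [IsScalarTower k S R]
    (z : S) [IsLocalization.Away z R] (I : Ideal S) [Module.Finite k (S ⧸ I)] :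
    ∀ᶠ N in atTop, Module.finrank k (R ⧸ I.map (algebraMap S R)) +
      Module.finrank k (S ⧸ I ⊔ Ideal.span {z ^ N}) = Module.finrank k (S ⧸ I) := by
  have : IsLocalization.Away (Ideal.Quotient.mk I z) (R ⧸ I.map (algebraMap S R)) := by
    have h : IsLocalization (Algebra.algebraMapSubmonoid (S ⧸ I) (Submonoid.powers z))
      (R ⧸ I.map (algebraMap S R)) := inferInstance
    rwa [Algebra.algebraMapSubmonoid_powers] at h
  have : IsScalarTower k (S ⧸ I) (R ⧸ I.map (algebraMap S R)) :=
    .of_algebraMap_eq fun c =>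
      congrArg (Ideal.Quotient.mk _) (IsScalarTower.algebraMap_apply k S R c)
  filter_upwards [eventually_finrank_away_add_finrank_quotient_span_pow (k := k)
    (R ⧸ I.map (algebraMap S R)) (Ideal.Quotient.mk I z)] with N hN
  have hspan : Ideal.span {Ideal.Quotient.mk I z ^ N} =
      (Ideal.span {z ^ N}).map (Ideal.Quotient.mkₐ k I) := by
    rw [Ideal.map_span, Set.image_singleton, map_pow, Ideal.Quotient.mkₐ_eq_mk]
  rw [← hN, hspan,
    (DoubleQuot.quotQuotEquivQuotSupₐ k I (Ideal.span {z ^ N})).toLinearEquiv.finrank_eq]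

end Localization

section MonoidAlgebraLocalization

variable {k Γ G : Type*} [CommSemiring k] [AddCommMonoid Γ] [AddCommGroup G] {φ : Γ →+ G} {e : Γ}

theorem exists_mapDomain_eq_mul_single (he : ∀ g, ∃ N : ℕ, g + N • φ e ∈ Set.range φ) (s : k[G]) :
    ∃ (N : ℕ) (t : k[Γ]), mapDomain φ t = s * single (N • φ e) 1 := by
  induction s using AddMonoidAlgebra.induction_linear with
  | zero => exact ⟨0, 0, by simp⟩
  | add s t hs ht =>
    obtain ⟨M, p, hp⟩ := hs
    obtain ⟨N, q, hq⟩ := ht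
    refine ⟨M + N, p * single (N • e) 1 + q * single (M • e) 1, ?_⟩
    simp only [mapDomain_add, mapDomain_mul, mapDomain_single, hp, hq, map_nsmul, mul_assoc,
      single_mul_single, add_mul, one_mul, ← add_nsmul, add_comm N M]
  | single g c =>
    obtain ⟨N, n, hn⟩ := he g
    exact ⟨N, single n c, by simp [single_mul_single, hn]⟩

theorem isLocalization_away_single [Algebra k[Γ] k[G]] (hφ : Function.Injective φ)
    (halg : algebraMap k[Γ] k[G] = mapDomainRingHom k φ)
    (he : ∀ g, ∃ N : ℕ, g + N • φ e ∈ Set.range φ) :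
    IsLocalization.Away (single e 1 : k[Γ]) k[G] := by
  have hpow (N : ℕ) : algebraMap k[Γ] k[G] (single e 1 ^ N) = single (N • φ e) 1 := by
    simp [halg, single_pow]
  refine (isLocalization_iff _ _).2 ⟨?_, fun s => ?_, fun {s t} hst => ?_⟩
  · rintro ⟨_, N, rfl⟩
    refine .of_mul_eq_one (single (-(N • φ e)) 1) ?_
    rw [hpow, single_mul_single, add_neg_cancel, one_mul, one_def]
  · obtain ⟨N, t, ht⟩ := exists_mapDomain_eq_mul_single he s
    exact ⟨(t, ⟨_, N, rfl⟩), by rw [hpow, ← ht, halg]; rfl⟩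
  · rw [halg] at hst
    exact ⟨1, by rw [mapDomain_injective hφ hst]⟩

end MonoidAlgebraLocalization

theorem pow_eq_zero_of_dvd_of_mul_pow_eq_zero {A : Type*} [CommMonoidWithZero A] {x y : A} {m N : ℕ}
    (hyx : y ∣ x ^ m) (hxy : (x * y) ^ N = 0) : x ^ ((m + 1) * N) = 0 := by
  refine zero_dvd_iff.1 (hxy ▸ ?_)
  rw [pow_mul, pow_succ']
  exact pow_dvd_pow_of_dvd (mul_dvd_mul_left x hyx) N

section Plane

theorem stairs_axes (a b : ℕ) :
    stairs (a, 0) (0, b) = (Finset.range a ×ˢ Finset.range b : Finset (ℕ × ℕ)) := by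
  ext ⟨i, j⟩
  simp [stairs]

theorem finite_stairs_axes (a b : ℕ) : (stairs (a, 0) (0, b)).Finite :=
  stairs_axes a b ▸ Finset.finite_toSet _

theorem ncard_stairs_axes (a b : ℕ) : (stairs (a, 0) (0, b)).ncard = a * b := by
  rw [stairs_axes, Set.ncard_coe_finset, Finset.card_product, Finset.card_range, Finset.card_range]

theorem snd_axis_le_of_le_add_fst_axis (a b : ℕ) (n : ℕ × ℕ) (h : ((0, b) : ℕ × ℕ) ≤ n + (a, 0)) :
    ((0, b) : ℕ × ℕ) ≤ n := by
  simpa [Prod.le_def] using h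

variable {k : Type*} [CommRing k] {w : ℕ × ℕ →+ ℤ} {F G : k[ℕ × ℕ]} {α β a b : ℕ}

theorem nonempty_basis_quotient_span_pair (hw : ∀ n, 0 ≤ w n)
    (hF : HasInitialExponent (-w) (a, 0) F) (hG : HasInitialExponent (-w) (0, b) G) :
    Nonempty (Module.Basis (stairs (a, 0) (0, b)) k (k[ℕ × ℕ] ⧸ Ideal.span {F, G})) :=
  hF.nonempty_basis_quotient hG (snd_axis_le_of_le_add_fst_axis a b)
    (Ideal.subset_span (by simp)) (Ideal.subset_span (by simp)) le_sup_left (M := 1) (N := 1)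
    (fun n _ => by rw [AddMonoidHom.neg_apply]; linarith [hw n])
    ((weightGE_neg_one_eq_bot (k := k) hw).trans_le bot_le)

theorem exists_weightGE_le_sup_span_pow (w : ℕ × ℕ →+ ℤ) {I : Ideal k[ℕ × ℕ]}
    (hx : single (a, 0) 1 ∈ I ⊔ Ideal.span {single (0, 1) 1})
    (hy : single (0, b) 1 ∈ I ⊔ Ideal.span {single (1, 0) 1}) (N : ℕ) :
    ∃ M, weightGE k w M ≤ (I ⊔ Ideal.span {single (1, 1) 1 ^ N}).restrictScalars k := by
  let π : k[ℕ × ℕ] →+* _ := Ideal.Quotient.mk (I ⊔ Ideal.span {(single (1, 1) 1 : k[ℕ × ℕ]) ^ N})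
  have hdvd {i j : ℕ × ℕ} (h : single i 1 ∈ I ⊔ Ideal.span {single j 1}) :
      π (single j 1) ∣ π (single i 1) := by
    obtain ⟨s, hs, t, ht, hst⟩ := Submodule.mem_sup.1 h
    rw [← hst, map_add, Ideal.Quotient.eq_zero_iff_mem.2 (Ideal.mem_sup_left hs), zero_add]
    exact map_dvd π (Ideal.mem_span_singleton.1 ht)
  have hxy : (π (single (1, 0) 1) * π (single (0, 1) 1)) ^ N = 0 := by
    rw [← map_mul, ← map_pow, single_mul_single, Ideal.Quotient.eq_zero_iff_mem]
    simpa using Ideal.mem_sup_right (Ideal.mem_span_singleton_self _)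
  have hxpow := pow_eq_zero_of_dvd_of_mul_pow_eq_zero (m := a)
    (by simpa [← map_pow, single_pow] using hdvd hx) hxy
  have hypow := pow_eq_zero_of_dvd_of_mul_pow_eq_zero (m := b)
    (by simpa [← map_pow, single_pow] using hdvd hy) (mul_comm (π (single (1, 0) 1)) _ ▸ hxy)
  rw [← map_pow, Ideal.Quotient.eq_zero_iff_mem] at hxpow hypow
  refine exists_weightGE_le_of_finite_stairs (finite_stairs_axes ((a + 1) * N) ((b + 1) * N)) w
    ?_ ?_
  · simpa [single_pow] using hxpow
  · simpa [single_pow] using hypow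

theorem eventually_nonempty_basis_quotient_sup_span_pow (hw : ∀ n, 0 ≤ w n)
    (hw₁ : 0 < w (1, 1)) (hF : HasInitialExponent w (α, 0) F)
    (hG : HasInitialExponent w (0, β) G)
    (hx : single (a, 0) 1 ∈ Ideal.span {F, G} ⊔ Ideal.span {single (0, 1) 1})
    (hy : single (0, b) 1 ∈ Ideal.span {F, G} ⊔ Ideal.span {single (1, 0) 1}) :
    ∀ᶠ N in atTop, Nonempty (Module.Basis (stairs (α, 0) (0, β)) k
      (k[ℕ × ℕ] ⧸ Ideal.span {F, G} ⊔ Ideal.span {single (1, 1) 1 ^ N})) := by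
  obtain ⟨M, hM⟩ := ((finite_stairs_axes α β).image w).bddAbove
  filter_upwards [eventually_ge_atTop (M + 1).toNat] with N hN
  obtain ⟨P, hP⟩ := exists_weightGE_le_sup_span_pow w hx hy N
  refine hF.nonempty_basis_quotient hG (snd_axis_le_of_le_add_fst_axis α β)
    (Ideal.mem_sup_left (Ideal.subset_span (by simp)))
    (Ideal.mem_sup_left (Ideal.subset_span (by simp))) (M := M + 1) ?_
    (fun n hn => Int.lt_add_one_of_le (hM (Set.mem_image_of_mem w hn))) hP
  have hzN : (single (1, 1) 1 ^ N : k[ℕ × ℕ]) ∈ weightGE k w (N * w (1, 1)) := by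
    rw [single_pow, one_pow]
    exact single_mem_weightGE (by rw [map_nsmul, nsmul_eq_mul])
  intro s hs
  obtain ⟨t, ht, z, hz, rfl⟩ := Submodule.mem_sup.1 hs
  obtain ⟨r, rfl⟩ := Ideal.mem_span_singleton'.1 hz
  refine Submodule.add_mem_sup ht (weightGE_anti ?_ (mul_mem_weightGE (M := 0)
    (mem_weightGE.2 fun n hn => absurd (hw n) hn.not_ge) hzN))
  nlinarith [Int.self_le_toNat (M + 1)]

end Plane

section Torus

/-- The inclusion of the polynomial ring in two variables into the Laurent polynomial ring. -/
def toLaurent (k : Type*) [CommSemiring k] : k[ℕ × ℕ] →+* k[ℤ × ℤ] :=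
  mapDomainRingHom k ((Nat.castAddMonoidHom ℤ).prodMap (Nat.castAddMonoidHom ℤ))

theorem toLaurent_single {k : Type*} [CommSemiring k] (i j : ℕ) (c : k) :
    toLaurent k (single (i, j) c) = single ((i : ℤ), (j : ℤ)) c := by
  simp [toLaurent]

theorem isLocalization_away_toLaurent {k : Type*} [CommSemiring k] [Algebra k[ℕ × ℕ] k[ℤ × ℤ]]
    (halg : algebraMap k[ℕ × ℕ] k[ℤ × ℤ] = toLaurent k) :
    IsLocalization.Away (single (1, 1) 1 : k[ℕ × ℕ]) k[ℤ × ℤ] := by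
  refine isLocalization_away_single (Nat.cast_injective.prodMap Nat.cast_injective) halg
    fun g => ?_
  let N := (-g.1).toNat + (-g.2).toNat
  exact ⟨N, ((g.1 + N).toNat, (g.2 + N).toNat), by ext <;> simp [N] <;> omega⟩

variable {k : Type*} [Field k] {w : ℕ × ℕ →+ ℤ} {F G : k[ℕ × ℕ]} {α β a b : ℕ}

theorem finrank_quotient_map_toLaurent_add_mul (hw : ∀ n, 0 ≤ w n) (hw₁ : 0 < w (1, 1))
    (hFα : HasInitialExponent w (α, 0) F) (hFb : HasInitialExponent (-w) (0, b) F)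
    (hGβ : HasInitialExponent w (0, β) G) (hGa : HasInitialExponent (-w) (a, 0) G)
    (hx : single (a, 0) 1 ∈ Ideal.span {F, G} ⊔ Ideal.span {single (0, 1) 1})
    (hy : single (0, b) 1 ∈ Ideal.span {F, G} ⊔ Ideal.span {single (1, 0) 1}) :
    Module.finrank k (k[ℤ × ℤ] ⧸ (Ideal.span {F, G}).map (toLaurent k)) + α * β = a * b := by
  let _ : Algebra k[ℕ × ℕ] k[ℤ × ℤ] := (toLaurent k).toAlgebra
  have : IsScalarTower k k[ℕ × ℕ] k[ℤ × ℤ] := .of_algebraMap_eq fun c => by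
    simp [RingHom.algebraMap_toAlgebra, ← Prod.mk_zero_zero, toLaurent_single]
  have := isLocalization_away_toLaurent (k := k) rfl
  obtain ⟨B⟩ := nonempty_basis_quotient_span_pair hw hGa hFb
  rw [Set.pair_comm] at B
  have : Finite (stairs (a, 0) (0, b)) := finite_stairs_axes a b
  have : Module.Finite k (k[ℕ × ℕ] ⧸ Ideal.span {F, G}) := .of_basis B
  obtain ⟨N, ⟨C⟩, hN⟩ := ((eventually_nonempty_basis_quotient_sup_span_pow hw hw₁ hFα hGβ hx hy).and
    (eventually_finrank_quotient_map_add_finrank_quotient_sup (k := k) k[ℤ × ℤ] (single (1, 1) 1)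
      (Ideal.span {F, G}))).exists
  rw [Module.finrank_eq_nat_card_basis B, Module.finrank_eq_nat_card_basis C] at hN
  rw [← ncard_stairs_axes, ← ncard_stairs_axes]
  exact hN

end Torus

section Trinomial

theorem hasInitialExponent_trinomial {k Γ : Type*} [CommRing k] [AddCommMonoid Γ]
    {w : Γ →+ ℤ} {u v t : Γ} {c : k} (hc : IsUnit c) (c' c'' : k) (hv : w u < w v)
    (ht : w u < w t) : HasInitialExponent w u (single u c + single v c' + single t c'') :=
  add_assoc (single u c) _ _ ▸ hasInitialExponent_single_add hc
    (add_mem (single_mem_weightGE hv) (single_mem_weightGE ht))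

theorem single_mem_sup_span_of_trinomial_mem {k Γ : Type*} [CommRing k] [AddCommMonoid Γ]
    [Preorder Γ] [CanonicallyOrderedAdd Γ] {I : Ideal k[Γ]} {u v t e : Γ} {c c' c'' : k}
    (h : single u c + single v c' + single t c'' ∈ I) (hc : IsUnit c'') (hu : e ≤ u)
    (hv : e ≤ v) : single t 1 ∈ I ⊔ Ideal.span {single e 1} := by
  have hdvd : ∀ i (d : k), e ≤ i → single i d ∈ I ⊔ Ideal.span {single e 1} := by
    intro i d hi
    obtain ⟨m, rfl⟩ := exists_add_of_le hi
    exact Ideal.mem_sup_right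
      (Ideal.mem_span_singleton.2 ⟨single m d, by simp [single_mul_single]⟩)
  obtain ⟨d, hd⟩ := hc
  have ht := sub_mem (Ideal.mem_sup_left h) (add_mem (hdvd u c hu) (hdvd v c' hv))
  rw [add_sub_cancel_left, ← hd] at ht
  simpa [single_mul_single] using Ideal.mul_mem_left _ (single 0 (↑d⁻¹ : k)) ht

/-- The weight on the exponents of the plane giving `x` weight `c` and `y` weight `e`. -/
def planeWeight (c e : ℕ) : ℕ × ℕ →+ ℤ :=
  (Nat.castAddMonoidHom ℤ).comp ((AddMonoidHom.mulLeft c).coprod (AddMonoidHom.mulLeft e))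

theorem planeWeight_mk (c e i j : ℕ) : planeWeight c e (i, j) = c * i + e * j := by
  simp [planeWeight]

theorem span_pair_mul_left_unit {R : Type*} [CommSemiring R] {u v : R} (hu : IsUnit u)
    (hv : IsUnit v) (f g : R) : Ideal.span {u * f, v * g} = Ideal.span {f, g} := by
  rw [Ideal.span_insert, Ideal.span_insert, Ideal.span_singleton_mul_left_unit hu,
    Ideal.span_singleton_mul_left_unit hv]

variable {k : Type*} [Field k] {c₀ c₁ c₂ d₀ d₁ d₂ : k}

theorem finrank_quotient_map_toLaurent_trinomials_add_mul {α β a b : ℕ} (hc₀ : c₀ ≠ 0)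
    (hc₂ : c₂ ≠ 0) (hd₀ : d₀ ≠ 0) (hd₂ : d₂ ≠ 0) (hα : 1 ≤ α) (hβ : 1 ≤ β)
    (hab : (α + 1) * (β + 1) < a * b) :
    Module.finrank k (k[ℤ × ℤ] ⧸ (Ideal.span
      {single (α, 0) c₀ + single (α + 1, 0) c₁ + single (0, b) c₂,
        single (0, β) d₀ + single (0, β + 1) d₁ + single (a, 0) d₂}).map (toLaurent k)) + α * β =
      a * b := by
  -- The ratio of the two weights is the mediant of `b / (α + 1)` and `(β + 1) / a`.
  let w := planeWeight (b + β + 1) (a + α + 1)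
  have hx : w (α, 0) < w (α + 1, 0) := by simp only [w, planeWeight_mk]; push_cast; nlinarith
  have hy : w (0, β) < w (0, β + 1) := by simp only [w, planeWeight_mk]; push_cast; nlinarith
  have hxy : w (α + 1, 0) < w (0, b) := by simp only [w, planeWeight_mk]; push_cast; nlinarith
  have hyx : w (0, β + 1) < w (a, 0) := by simp only [w, planeWeight_mk]; push_cast; nlinarith
  refine finrank_quotient_map_toLaurent_add_mul (w := w) (fun n => ?_) ?_ ?_ ?_ ?_ ?_ ?_ ?_
  · exact planeWeight_mk _ _ n.1 n.2 ▸ by positivity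
  · exact planeWeight_mk _ _ 1 1 ▸ by positivity
  · exact hasInitialExponent_trinomial hc₀.isUnit _ _ hx (hx.trans hxy)
  · rw [add_comm, ← add_assoc]
    exact hasInitialExponent_trinomial hc₂.isUnit _ _ (neg_lt_neg (hx.trans hxy)) (neg_lt_neg hxy)
  · exact hasInitialExponent_trinomial hd₀.isUnit _ _ hy (hy.trans hyx)
  · rw [add_comm, ← add_assoc]
    exact hasInitialExponent_trinomial hd₂.isUnit _ _ (neg_lt_neg (hy.trans hyx)) (neg_lt_neg hyx)
  · exact single_mem_sup_span_of_trinomial_mem (Ideal.subset_span (.inr rfl)) hd₂.isUnit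
      (by simpa [Prod.le_def]) (by simp [Prod.le_def])
  · exact single_mem_sup_span_of_trinomial_mem (Ideal.subset_span (.inl rfl)) hc₂.isUnit
      (by simpa [Prod.le_def]) (by simp [Prod.le_def])

end Trinomial

theorem bb_index_regime_top_right_general {k : Type*} [Field k] {c₀ c₁ c₂ d₀ d₁ d₂ : k}
    (hc₀ : c₀ ≠ 0) (hc₂ : c₂ ≠ 0) (hd₀ : d₀ ≠ 0) (hd₂ : d₂ ≠ 0) (α β a b : ℤ) (hα : 1 ≤ α)
    (hβ : 1 ≤ β) (ha : 0 ≤ a) (hb : 0 ≤ b) (hab : (α + 1) * (β + 1) < a * b) :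
    (Module.finrank k (k[ℤ × ℤ] ⧸ Ideal.span
      {single (0, 0) c₀ + single (1, 0) c₁ + single (-α, b) c₂,
        single (0, 0) d₀ + single (0, 1) d₁ + single (a, -β) d₂}) : ℤ) = a * b - α * β := by
  lift α to ℕ using by omega
  lift β to ℕ using by omega
  lift a to ℕ using ha
  lift b to ℕ using hb
  have hunit (g : ℤ × ℤ) : IsUnit (single g 1 : k[ℤ × ℤ]) :=
    .of_mul_eq_one (single (-g) 1) (by simp [single_mul_single, one_def])
  have h := finrank_quotient_map_toLaurent_trinomials_add_mul (c₁ := c₁) (d₁ := d₁) hc₀ hc₂ hd₀ hd₂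
    (by exact_mod_cast hα) (by exact_mod_cast hβ) (by exact_mod_cast hab)
  have hF : toLaurent k (single (α, 0) c₀ + single (α + 1, 0) c₁ + single (0, b) c₂) =
      single ((α : ℤ), (0 : ℤ)) 1 *
        (single (0, 0) c₀ + single (1, 0) c₁ + single (-(α : ℤ), (b : ℤ)) c₂) := by
    simp [mul_add, toLaurent_single, single_mul_single]
  have hG : toLaurent k (single (0, β) d₀ + single (0, β + 1) d₁ + single (a, 0) d₂) =
      single ((0 : ℤ), (β : ℤ)) 1 *
        (single (0, 0) d₀ + single (0, 1) d₁ + single ((a : ℤ), -(β : ℤ)) d₂) := by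
    simp [mul_add, toLaurent_single, single_mul_single]
  rw [Ideal.map_span, Set.image_pair, hF, hG, span_pair_mul_left_unit (hunit _) (hunit _)] at h
  rw [eq_sub_iff_add_eq]
  exact_mod_cast h

/-- If `α, β ≥ 1`, `a, b ≥ 0` and `a·b > (α+1)·(β+1)`, the topological index of BB(ᾱ, β̄, a, b) is `Q = a·b − α·β`. -/
theorem bb_index_regime_top_right (α β a b : ℤ) (hα : 1 ≤ α) (hβ : 1 ≤ β) (ha : 0 ≤ a) (hb : 0 ≤ b) (hab : (α + 1) * (β + 1) < a * b) :
    (Module.finrank (ZMod 2)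
      (LaurentR ⧸ Ideal.span ({fBB α b, gBB β a} : Set LaurentR)) : ℤ) = a * b - α * β := by
  exact bb_index_regime_top_right_general (k := ZMod 2) (c₁ := 1) (d₁ := 1) one_ne_zero
    one_ne_zero one_ne_zero one_ne_zero α β a b hα hβ ha hb hab
end
end

section
/- Let α, β, a, b be integers with α ≥ 1, β ≥ 1, a ≥ 0, b ≥ 0 and α·β < a·b < (α + 1)·(β + 1). Then the topological index of the BB(ᾱ, β̄, a, b) code, with f = 1 + x + x^{-α} y^{b} and g = 1 + y + y^{-β} x^{a} in R, is Q = dim_{F₂} R ⧸ (f, g) = α + β + 1. -/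
/-!
Clearing denominators turns `f` and `g` into the polynomials `F = x ^ α * f` and `G = y ^ β * g`,
and the Laurent quotient is the localization of `k[x, y] / (F, G)` at `x * y`. By Fitting's lemma,
localizing lowers the dimension by that of `k[x, y] / (F, G, (x * y) ^ n)` for large `n`. This is
the part at the origin: modulo `F`, `G` and `(x * y) ^ n`, both `x` and `y` are nilpotent.

Both dimensions are read off leading terms. If `F = x ^ p + …` and `G = y ^ q + …` for a weight on
the exponents, expanding polynomials in powers of `F` and `G` compares `(F, G)` with
`(x ^ p, y ^ q)` and gives dimension `p * q`. For a positive weight, `a * b < (α + 1) * (β + 1)`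
allows the leading terms to be `x ^ (α + 1)` and `y ^ (β + 1)`; for a negative weight, working
modulo high order, `α * β < a * b` allows them to be `x ^ α` and `y ^ β`. The index is the
difference `(α + 1) * (β + 1) - α * β`.
-/

noncomputable section

namespace BivariateBicycle

open Filter AddMonoidAlgebra

section MulLeft

variable {k A B : Type*} [CommRing k] [CommRing A] [Algebra k A] [CommRing B] [Algebra k B]
  [Algebra A B] [IsScalarTower k A B]

lemma range_mulLeft_eq_span_singleton (e : A) :
    LinearMap.range (LinearMap.mulLeft k e) = (Ideal.span {e}).restrictScalars k := by
  ext x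
  simp [Ideal.mem_span_singleton, dvd_def, eq_comm]

lemma ker_algebraMap_eq_iSup_ker_mulLeft_pow (e : A) [IsLocalization.Away e B] :
    LinearMap.ker (IsScalarTower.toAlgHom k A B).toLinearMap =
      ⨆ n, LinearMap.ker (LinearMap.mulLeft k e ^ n) := by
  have hmono : Monotone fun n => LinearMap.ker (LinearMap.mulLeft k e ^ n) :=
    (LinearMap.mulLeft k e).iterateKer.monotone
  ext x
  rw [Submodule.mem_iSup_of_directed _ hmono.directed_le]
  simp only [LinearMap.mem_ker, LinearMap.pow_mulLeft, LinearMap.mulLeft_apply,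
    AlgHom.toLinearMap_apply, IsScalarTower.coe_toAlgHom']
  constructor
  · intro hx
    simpa using IsLocalization.Away.exists_of_eq e (hx.trans (map_zero _).symm)
  · rintro ⟨n, hn⟩
    refine (IsLocalization.Away.algebraMap_pow_isUnit e n).mul_right_eq_zero.1 ?_
    rw [← map_pow, ← map_mul, hn, map_zero]

end MulLeft

section Fitting

variable (k : Type*) {A B P L : Type*} [Field k] [CommRing A] [Algebra k A] [CommRing B]
  [Algebra k B] [Algebra A B] [IsScalarTower k A B] [CommRing P] [Algebra k P] [CommRing L]
  [Algebra k L] [Algebra P L] [IsScalarTower k P L]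

/-- Fitting's lemma for multiplication by `e`: the localization is the image of a high power of `e`,
on which `e` acts invertibly, and the quotient has the dimension of the kernel. -/
lemma eventually_finrank_away_add_finrank_quotient [Module.Finite k A] (e : A)
    [IsLocalization.Away e B] :
    ∀ᶠ n in atTop, Module.finrank k B + Module.finrank k (A ⧸ Ideal.span {e ^ n}) =
      Module.finrank k A := by
  have : IsArtinianRing A := IsArtinianRing.of_finite k A
  set φ := (IsScalarTower.toAlgHom k A B).toLinearMap
  have hφ : Function.Surjective φ :=
    IsArtinianRing.localization_surjective (Submonoid.powers e) B
  filter_upwards [(LinearMap.mulLeft k e).eventually_iSup_ker_pow_eq] with n hn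
  set f := LinearMap.mulLeft k e ^ n with hf
  have hB : Module.finrank k B + Module.finrank k (LinearMap.ker f) = Module.finrank k A := by
    rw [← hn, ← ker_algebraMap_eq_iSup_ker_mulLeft_pow (B := B), ← finrank_top k B,
      ← LinearMap.range_eq_top.2 hφ]
    exact φ.finrank_range_add_finrank_ker
  have hcoker : Module.finrank k (A ⧸ Ideal.span {e ^ n}) = Module.finrank k (A ⧸ f.range) := by
    rw [hf, LinearMap.pow_mulLeft, range_mulLeft_eq_span_singleton]
    exact (Submodule.Quotient.restrictScalarsEquiv k _).symm.finrank_eq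
  have hrange := f.finrank_range_add_finrank_ker
  have hquot := f.range.finrank_quotient_add_finrank
  omega

lemma eventually_finrank_quotient_map_add_finrank_quotient_sup (e : P) [IsLocalization.Away e L]
    (J : Ideal P) [Module.Finite k (P ⧸ J)] :
    ∀ᶠ n in atTop, Module.finrank k (L ⧸ J.map (algebraMap P L)) +
      Module.finrank k (P ⧸ J ⊔ Ideal.span {e ^ n}) = Module.finrank k (P ⧸ J) := by
  have : IsLocalization.Away (Ideal.Quotient.mk J e) (L ⧸ J.map (algebraMap P L)) := by
    have h : IsLocalization (Algebra.algebraMapSubmonoid (P ⧸ J) (Submonoid.powers e))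
        (L ⧸ J.map (algebraMap P L)) := inferInstance
    rwa [Algebra.algebraMapSubmonoid_powers] at h
  have : IsScalarTower k (P ⧸ J) (L ⧸ J.map (algebraMap P L)) :=
    .of_algebraMap_eq fun c =>
      congrArg (Ideal.Quotient.mk _) (IsScalarTower.algebraMap_apply k P L c)
  filter_upwards [eventually_finrank_away_add_finrank_quotient k
    (B := L ⧸ J.map (algebraMap P L)) (Ideal.Quotient.mk J e)] with n hn
  rw [← hn, ← (DoubleQuot.quotQuotEquivQuotSupₐ k J (Ideal.span {e ^ n})).toLinearEquiv.finrank_eq,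
    Ideal.map_span, Set.image_singleton, map_pow]
  rfl

end Fitting

section UnipotentMap

variable {R V : Type*} [Ring R] [AddCommGroup V] [Module R V] {W : ℤ → Submodule R V}
  {T : V →ₗ[R] V}

/-- `T` is unipotent for the increasing filtration `W`: it acts as the identity on every graded
piece `W n / W (n - 1)`. -/
def IsUnipotentFor (W : ℤ → Submodule R V) (T : V →ₗ[R] V) : Prop :=
  ∀ n, ∀ v ∈ W n, T v - v ∈ W (n - 1)

lemma exists_natCast_add_mem (hW : Monotone W) {n : ℤ} {v : V} (hv : v ∈ W n) (c : ℤ) :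
    ∃ d : ℕ, v ∈ W (c + d) :=
  ⟨(n - c).toNat, hW (by omega) hv⟩

lemma IsUnipotentFor.apply_sub_mem (hT : IsUnipotentFor W T) {c : ℤ} {d : ℕ} {v : V}
    (hv : v ∈ W (c + (d + 1 : ℕ))) : T v - v ∈ W (c + d) := by
  convert hT _ v hv using 2
  push_cast
  ring

lemma IsUnipotentFor.mem_of_apply_mem (hT : IsUnipotentFor W T) (hW : Monotone W) {n c : ℤ}
    {v : V} (hv : v ∈ W n) (hTv : T v ∈ W c) : v ∈ W c := by
  obtain ⟨d, hd⟩ := exists_natCast_add_mem hW hv c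
  clear hv
  induction d with
  | zero => simpa using hd
  | succ d ih =>
    refine ih ?_
    simpa using sub_mem (hW (by omega) hTv : T v ∈ W (c + d)) (hT.apply_sub_mem hd)

lemma IsUnipotentFor.mem_range_sup (hT : IsUnipotentFor W T) (hW : Monotone W) {n : ℤ} (c : ℤ)
    {v : V} (hv : v ∈ W n) : v ∈ LinearMap.range T ⊔ W c := by
  obtain ⟨d, hd⟩ := exists_natCast_add_mem hW hv c
  clear hv
  induction d generalizing v with
  | zero => exact Submodule.mem_sup_right (by simpa using hd)
  | succ d ih =>
    have hTv : T v ∈ LinearMap.range T ⊔ W c := Submodule.mem_sup_left ⟨v, rfl⟩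
    simpa using sub_mem hTv (ih (hT.apply_sub_mem hd))

end UnipotentMap

section Weight

variable {k M : Type*} [CommRing k] [AddCommMonoid M] {w : M →+ ℤ} {u v : k[M]} {s t r : M}
  {m n : ℤ}

variable (k) in
/-- The increasing filtration of `k[M]` by the weight `w` of the exponents. -/
def weightLE (w : M →+ ℤ) (n : ℤ) : Submodule k k[M] := supported k k {s | w s ≤ n}

lemma weightLE_mono (w : M →+ ℤ) : Monotone (weightLE k w) :=
  fun _ _ hmn => supported_mono fun _ hs => le_trans hs hmn

lemma single_mem_weightLE (hs : w s ≤ n) (c : k) : single s c ∈ weightLE k w n :=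
  mem_supported.2 fun t ht => by
    rwa [Finset.mem_singleton.1 (Finsupp.support_single_subset ht)]

lemma exists_mem_weightLE (w : M →+ ℤ) (u : k[M]) : ∃ n, u ∈ weightLE k w n := by
  obtain ⟨n, hn⟩ := (u.coeff.support.image w).bddAbove
  exact ⟨n, mem_supported.2 fun s hs => hn (by simpa using ⟨s, by simpa using hs, rfl⟩)⟩

lemma mul_mem_weightLE (hu : u ∈ weightLE k w m) (hv : v ∈ weightLE k w n) :
    u * v ∈ weightLE k w (m + n) := by
  classical
  refine mem_supported.2 fun i hi => ?_
  obtain ⟨s, hs, t, ht, rfl⟩ := Finset.mem_add.1 (support_coeff_mul_subset u v hi)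
  exact (map_add w s t).trans_le (add_le_add (mem_supported.1 hu hs) (mem_supported.1 hv ht))

/-- `u` is the monomial with exponent `s` plus terms of strictly smaller weight. -/
def HasLead (w : M →+ ℤ) (u : k[M]) (s : M) : Prop :=
  u - single s 1 ∈ weightLE k w (w s - 1)

lemma hasLead_single (w : M →+ ℤ) (s : M) : HasLead (k := k) w (single s 1) s := by
  simp [HasLead]

lemma hasLead_single_add_single_add_single (ht : w t < w s) (hr : w r < w s) :
    HasLead (k := k) w (single s 1 + single t 1 + single r 1) s := by
  rw [HasLead, add_assoc, add_sub_cancel_left]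
  exact add_mem (single_mem_weightLE (by omega) 1) (single_mem_weightLE (by omega) 1)

lemma HasLead.mem_weightLE (hu : HasLead w u s) : u ∈ weightLE k w (w s) := by
  simpa using add_mem (weightLE_mono w (by omega) hu) (single_mem_weightLE (le_refl (w s)) 1)

lemma HasLead.mul (hu : HasLead w u s) (hv : HasLead w v t) : HasLead w (u * v) (s + t) := by
  have hsplit : u * v - AddMonoidAlgebra.single (s + t) 1 =
      (u - AddMonoidAlgebra.single s 1) * v +
        AddMonoidAlgebra.single s 1 * (v - AddMonoidAlgebra.single t 1) := by
    rw [sub_mul, mul_sub, single_mul_single, one_mul, sub_add_sub_cancel]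
  rw [HasLead, hsplit, map_add]
  refine add_mem ?_ ?_
  · convert mul_mem_weightLE hu hv.mem_weightLE using 2
    ring
  · convert mul_mem_weightLE (hasLead_single w s).mem_weightLE hv using 2
    ring

lemma HasLead.pow (hu : HasLead w u s) (n : ℕ) : HasLead w (u ^ n) (n • s) := by
  induction n with
  | zero => simpa [one_def] using hasLead_single (k := k) w 0
  | succ n ih =>
    rw [pow_succ, succ_nsmul]
    exact ih.mul hu

lemma isUnipotentFor_of_hasLead {T : k[M] →ₗ[k] k[M]}
    (hT : ∀ s, HasLead w (T (single s 1)) s) : IsUnipotentFor (weightLE k w) T := by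
  intro n
  suffices weightLE k w n ≤ (weightLE k w (n - 1)).comap (T - LinearMap.id) from @this
  rw [weightLE, supported_eq_span_single, Submodule.span_le]
  rintro _ ⟨s, hs, rfl⟩
  have hs : w s ≤ n := hs
  exact weightLE_mono w (by omega) (hT s)

variable (k) in
/-- The filtration step `weightLE k w n` as an ideal, for a nonpositive weight `w`. With `w` the
negative of a grading, these are the polynomials of order at least `-n`. -/
def weightIdeal (hw : ∀ s, w s ≤ 0) (n : ℤ) : Ideal k[M] :=
  { weightLE k w n with
    smul_mem' := fun u v hv => by
      have hu : u ∈ weightLE k w 0 := mem_supported.2 fun s _ => hw s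
      simpa using mul_mem_weightLE hu hv }

lemma weightIdeal_le {hw : ∀ s, w s ≤ 0} {K : Ideal k[M]} (hK : ∀ s, w s ≤ n → single s 1 ∈ K) :
    weightIdeal k hw n ≤ K := by
  suffices weightLE k w n ≤ K.restrictScalars k from this
  rw [weightLE, supported_eq_span_single, Submodule.span_le]
  rintro _ ⟨s, hs, rfl⟩
  exact hK s hs

lemma single_mem_of_le [PartialOrder M] [CanonicallyOrderedAdd M] {K : Ideal k[M]} (hst : s ≤ t)
    (hs : single s 1 ∈ K) : single t 1 ∈ K := by
  obtain ⟨r, rfl⟩ := exists_add_of_le hst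
  simpa [single_mul_single] using K.mul_mem_right (single r 1) hs

end Weight

section MonomialQuotient

variable {k M : Type*} [CommRing k]

lemma finrank_quotient_supported [Nontrivial k] (S : Set M) :
    Module.finrank k (k[M] ⧸ supported k k S) = Nat.card ↥Sᶜ := by
  have hcompl : IsCompl (supported k k S) (supported k k Sᶜ) := by
    simp only [supported]
    refine (Submodule.orderIsoMapComap (coeffLinearEquiv k)).symm.isCompl_iff.1 ⟨?_, ?_⟩
    · exact Finsupp.disjoint_supported_supported disjoint_compl_right
    · exact Finsupp.codisjoint_supported_supported isCompl_compl.codisjoint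
  let e := (Submodule.quotientEquivOfIsCompl _ _ hcompl).trans (supportedEquivFinsupp Sᶜ)
  exact Module.finrank_eq_nat_card_basis (Module.Basis.ofRepr e)

lemma span_pair_single_eq_supported (p q : ℕ) :
    (Ideal.span {single (p, 0) 1, single (0, q) 1} : Ideal k[ℕ × ℕ]).restrictScalars k =
      supported k k {s | p ≤ s.1 ∨ q ≤ s.2} := by
  ext u
  rw [Submodule.restrictScalars_mem, ← Set.image_pair (fun s : ℕ × ℕ => (single s 1 : k[ℕ × ℕ])),
    mem_supported]
  refine (mem_ideal_span_of'_image (x := u)).trans (forall₂_congr fun s _ => ?_)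
  simp only [Set.mem_insert_iff, Set.mem_singleton_iff, exists_eq_or_imp, exists_eq_left,
    ← le_iff_exists_add', Prod.le_def, zero_le, and_true, true_and, Set.mem_ofPred_eq]

lemma finrank_quotient_span_pair_single [Nontrivial k] (p q : ℕ) :
    Module.finrank k
      (k[ℕ × ℕ] ⧸ (Ideal.span {single (p, 0) 1, single (0, q) 1} : Ideal k[ℕ × ℕ])) = p * q := by
  rw [← (Submodule.Quotient.restrictScalarsEquiv k _).finrank_eq, span_pair_single_eq_supported,
    finrank_quotient_supported]
  have hbox : {s : ℕ × ℕ | p ≤ s.1 ∨ q ≤ s.2}ᶜ = Finset.range p ×ˢ Finset.range q := by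
    ext s
    simp
  rw [hbox, Nat.card_coe_set_eq]
  simp [Set.ncard_prod]

end MonomialQuotient

section AdicMap

variable {k : Type*} [CommRing k] {F G : k[ℕ × ℕ]} {p q : ℕ} {w : ℕ × ℕ →+ ℤ} {c : ℤ}

/-- The `k`-linear map sending `x ^ i * y ^ j` to
`F ^ (i / p) * G ^ (j / q) * x ^ (i % p) * y ^ (j % q)`. It turns multiplication by `x ^ p` and
`y ^ q` into multiplication by `F` and `G`, so it compares `(x ^ p, y ^ q)` with `(F, G)`. -/
def adicMap (F G : k[ℕ × ℕ]) (p q : ℕ) : k[ℕ × ℕ] →ₗ[k] k[ℕ × ℕ] :=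
  (AddMonoidAlgebra.basis (ℕ × ℕ) k).constr k fun s =>
    F ^ (s.1 / p) * G ^ (s.2 / q) * single (s.1 % p, s.2 % q) 1

lemma adicMap_single (F G : k[ℕ × ℕ]) (p q : ℕ) (s : ℕ × ℕ) :
    adicMap F G p q (single s 1) =
      F ^ (s.1 / p) * G ^ (s.2 / q) * single (s.1 % p, s.2 % q) 1 := by
  rw [adicMap, ← AddMonoidAlgebra.basis_apply, Module.Basis.constr_basis]

lemma adicMap_single_fst_mul (hp : 0 < p) (u : k[ℕ × ℕ]) :
    adicMap F G p q (single (p, 0) 1 * u) = F * adicMap F G p q u := by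
  suffices adicMap F G p q ∘ₗ LinearMap.mulLeft k (single (p, 0) 1) =
      LinearMap.mulLeft k F ∘ₗ adicMap F G p q from LinearMap.congr_fun this u
  refine (AddMonoidAlgebra.basis (ℕ × ℕ) k).ext fun s => ?_
  simp [single_mul_single, adicMap_single, Nat.add_div_left _ hp, pow_succ', mul_assoc]

lemma adicMap_single_snd_mul (hq : 0 < q) (u : k[ℕ × ℕ]) :
    adicMap F G p q (single (0, q) 1 * u) = G * adicMap F G p q u := by
  suffices adicMap F G p q ∘ₗ LinearMap.mulLeft k (single (0, q) 1) =
      LinearMap.mulLeft k G ∘ₗ adicMap F G p q from LinearMap.congr_fun this u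
  refine (AddMonoidAlgebra.basis (ℕ × ℕ) k).ext fun s => ?_
  simp [single_mul_single, adicMap_single, Nat.add_div_left _ hq, pow_succ', mul_assoc,
    mul_left_comm]

lemma isUnipotentFor_adicMap (hF : HasLead w F (p, 0)) (hG : HasLead w G (0, q)) :
    IsUnipotentFor (weightLE k w) (adicMap F G p q) := by
  refine isUnipotentFor_of_hasLead fun s => ?_
  rw [adicMap_single]
  convert ((hF.pow (s.1 / p)).mul (hG.pow (s.2 / q))).mul
    (hasLead_single w (s.1 % p, s.2 % q)) using 1
  ext <;> simp [Nat.div_add_mod']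

lemma exists_adicMap_add (hF : HasLead w F (p, 0)) (hG : HasLead w G (0, q)) (c : ℤ)
    (u : k[ℕ × ℕ]) : ∃ v, ∃ r ∈ weightLE k w c, adicMap F G p q v + r = u := by
  obtain ⟨n, hu⟩ := exists_mem_weightLE w u
  obtain ⟨_, ⟨v, rfl⟩, r, hr, hvr⟩ := Submodule.mem_sup.1
    ((isUnipotentFor_adicMap hF hG).mem_range_sup (weightLE_mono w) c hu)
  exact ⟨v, r, hr, hvr⟩

lemma adicMap_mem_iff (hp : 0 < p) (hq : 0 < q) (hF : HasLead w F (p, 0))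
    (hG : HasLead w G (0, q)) {I : Ideal k[ℕ × ℕ]} (hI : I.restrictScalars k = weightLE k w c)
    (hc : ∀ s, w s ≤ c → p ≤ s.1 ∨ q ≤ s.2) (v : k[ℕ × ℕ]) :
    adicMap F G p q v ∈ Ideal.span {F, G} ⊔ I ↔
      v ∈ Ideal.span {single (p, 0) 1, single (0, q) 1} := by
  have hmemI (u : k[ℕ × ℕ]) : u ∈ I ↔ u ∈ weightLE k w c := by
    rw [← hI, Submodule.restrictScalars_mem]
  have hcE : weightLE k w c ≤ (Ideal.span {single (p, 0) 1, single (0, q) 1}).restrictScalars k :=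
    (supported_mono hc).trans_eq (span_pair_single_eq_supported p q).symm
  constructor
  · intro hv
    obtain ⟨_, hFG, i, hi, hsum⟩ := Submodule.mem_sup.1 hv
    obtain ⟨u₁, u₂, rfl⟩ := Ideal.mem_span_pair.1 hFG
    obtain ⟨v₁, r₁, hr₁, rfl⟩ := exists_adicMap_add hF hG c u₁
    obtain ⟨v₂, r₂, hr₂, rfl⟩ := exists_adicMap_add hF hG c u₂
    set e := single (p, 0) 1 * v₁ + single (0, q) 1 * v₂
    have hTe : adicMap F G p q (v - e) = F * r₁ + G * r₂ + i := by
      rw [map_sub, map_add, adicMap_single_fst_mul hp, adicMap_single_snd_mul hq, ← hsum]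
      ring
    have hmem : adicMap F G p q (v - e) ∈ weightLE k w c := by
      rw [hTe, ← hmemI]
      rw [← hmemI] at hr₁ hr₂
      exact add_mem (add_mem (I.mul_mem_left F hr₁) (I.mul_mem_left G hr₂)) hi
    obtain ⟨n, hn⟩ := exists_mem_weightLE w (v - e)
    have hve := hcE ((isUnipotentFor_adicMap hF hG).mem_of_apply_mem (weightLE_mono w) hn hmem)
    have he : e ∈ Ideal.span {single (p, 0) 1, single (0, q) 1} :=
      Ideal.mem_span_pair.2 ⟨v₁, v₂, by ring⟩
    simpa using add_mem hve he
  · intro hv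
    obtain ⟨v₁, v₂, rfl⟩ := Ideal.mem_span_pair.1 hv
    rw [mul_comm v₁, mul_comm v₂, map_add, adicMap_single_fst_mul hp, adicMap_single_snd_mul hq]
    exact Ideal.mem_sup_left (Ideal.mem_span_pair.2
      ⟨adicMap F G p q v₁, adicMap F G p q v₂, by ring⟩)

theorem finrank_quotient_span_pair_sup [Nontrivial k] (hp : 0 < p) (hq : 0 < q)
    (hF : HasLead w F (p, 0)) (hG : HasLead w G (0, q)) {I : Ideal k[ℕ × ℕ]}
    (hI : I.restrictScalars k = weightLE k w c) (hc : ∀ s, w s ≤ c → p ≤ s.1 ∨ q ≤ s.2) :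
    Module.finrank k (k[ℕ × ℕ] ⧸ Ideal.span {F, G} ⊔ I) = p * q := by
  set J := Ideal.span {F, G} ⊔ I
  let Φ := (J.restrictScalars k).mkQ ∘ₗ adicMap F G p q
  have hΦ : Function.Surjective Φ := by
    intro z
    obtain ⟨u, rfl⟩ := Submodule.mkQ_surjective _ z
    obtain ⟨v, r, hr, rfl⟩ := exists_adicMap_add hF hG c u
    have hrJ : r ∈ J := Ideal.mem_sup_right (show r ∈ I.restrictScalars k from hI ▸ hr)
    refine ⟨v, (Submodule.Quotient.eq _).2 ?_⟩
    simpa using hrJ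
  have hker : LinearMap.ker Φ =
      (Ideal.span {single (p, 0) 1, single (0, q) 1}).restrictScalars k := by
    ext v
    simpa [Φ] using adicMap_mem_iff hp hq hF hG hI hc v
  rw [← finrank_quotient_span_pair_single (k := k) p q,
    ← (Submodule.Quotient.restrictScalarsEquiv k J).finrank_eq,
    ← (Submodule.Quotient.restrictScalarsEquiv k
      (Ideal.span {single (p, 0) 1, single (0, q) 1} : Ideal k[ℕ × ℕ])).finrank_eq, ← hker]
  exact (Φ.quotKerEquivOfSurjective hΦ).finrank_eq.symm

end AdicMap

section Laurent

variable (k : Type*) [CommRing k]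

/-- The inclusion of the polynomial ring `k[x, y]` into the Laurent polynomial ring. -/
def toLaurent : k[ℕ × ℕ] →ₐ[k] k[ℤ × ℤ] :=
  mapDomainAlgHom k k ((Nat.castAddMonoidHom ℤ).prodMap (Nat.castAddMonoidHom ℤ))

lemma toLaurent_single (s : ℕ × ℕ) (c : k) :
    toLaurent k (single s c) = single ((s.1 : ℤ), (s.2 : ℤ)) c := by
  simp [toLaurent, Prod.map]

lemma toLaurent_injective : Function.Injective (toLaurent k) :=
  mapDomain_injective (Nat.cast_injective.prodMap Nat.cast_injective)

scoped instance : Algebra k[ℕ × ℕ] k[ℤ × ℤ] := (toLaurent k).toAlgebra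

scoped instance : IsScalarTower k k[ℕ × ℕ] k[ℤ × ℤ] :=
  .of_algebraMap_eq fun c => ((toLaurent k).commutes c).symm

variable {k} in
lemma exists_mul_toLaurent_pow_eq (u : k[ℤ × ℤ]) :
    ∃ (n : ℕ) (v : k[ℕ × ℕ]), u * toLaurent k (single (1, 1) 1) ^ n = toLaurent k v := by
  induction u using AddMonoidAlgebra.induction_linear with
  | zero => exact ⟨0, 0, by simp⟩
  | add u₁ u₂ hu₁ hu₂ =>
    obtain ⟨n₁, v₁, hu₁⟩ := hu₁
    obtain ⟨n₂, v₂, hu₂⟩ := hu₂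
    refine ⟨n₁ + n₂, v₁ * single (1, 1) 1 ^ n₂ + v₂ * single (1, 1) 1 ^ n₁, ?_⟩
    simp only [map_add, map_mul, map_pow, ← hu₁, ← hu₂]
    ring
  | single s c =>
    obtain ⟨i, j⟩ := s
    refine ⟨i.natAbs + j.natAbs, single ((i + i.natAbs + j.natAbs).toNat,
      (j + i.natAbs + j.natAbs).toNat) c, ?_⟩
    rw [← map_pow, single_pow, toLaurent_single, toLaurent_single, single_mul_single]
    simp only [one_pow, mul_one, Prod.smul_mk, smul_eq_mul, Prod.mk_add_mk]
    congr 2 <;> omega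

lemma isUnit_single (s : ℤ × ℤ) : IsUnit (single s 1 : k[ℤ × ℤ]) :=
  .of_mul_eq_one (single (-s) 1) (by simp [single_mul_single, one_def])

scoped instance : IsLocalization.Away (single (1, 1) 1 : k[ℕ × ℕ]) k[ℤ × ℤ] := by
  refine .mk _ ?_ exists_mul_toLaurent_pow_eq fun u v huv => ⟨0, ?_⟩
  · exact toLaurent_single k (1, 1) 1 ▸ isUnit_single k _
  · rw [toLaurent_injective k huv]

/-- The polynomial `x ^ α * f`, where `f = 1 + x + x ^ (-α) * y ^ b`. -/
def polyF (α b : ℕ) : k[ℕ × ℕ] := single (α, 0) 1 + single (α + 1, 0) 1 + single (0, b) 1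

/-- The polynomial `y ^ β * g`, where `g = 1 + y + x ^ a * y ^ (-β)`. -/
def polyG (β a : ℕ) : k[ℕ × ℕ] := single (0, β) 1 + single (0, β + 1) 1 + single (a, 0) 1

lemma map_span_polyF_polyG (α β a b : ℕ) :
    (Ideal.span {polyF k α b, polyG k β a}).map (algebraMap k[ℕ × ℕ] k[ℤ × ℤ]) =
      Ideal.span {1 + single (1, 0) 1 + single (-(α : ℤ), (b : ℤ)) 1,
        1 + single (0, 1) 1 + single ((a : ℤ), -(β : ℤ)) 1} := by
  have hF : toLaurent k (polyF k α b) = single ((α : ℤ), 0) 1 *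
      (1 + single (1, 0) 1 + single (-(α : ℤ), (b : ℤ)) 1) := by
    simp [polyF, toLaurent_single, mul_add, single_mul_single]
  have hG : toLaurent k (polyG k β a) = single (0, (β : ℤ)) 1 *
      (1 + single (0, 1) 1 + single ((a : ℤ), -(β : ℤ)) 1) := by
    simp [polyG, toLaurent_single, mul_add, single_mul_single]
  rw [Ideal.map_span, Set.image_pair]
  change Ideal.span {toLaurent k (polyF k α b), toLaurent k (polyG k β a)} = _
  rw [hF, hG]
  simp only [Ideal.span_insert, Ideal.span_singleton_mul_left_unit (isUnit_single k _)]

end Laurent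

section Weights

variable {k : Type*} [CommRing k]

/-- The weight `(i, j) ↦ m * i + n * j` on exponents. -/
def weight (m n : ℤ) : ℕ × ℕ →+ ℤ where
  toFun s := m * s.1 + n * s.2
  map_zero' := by simp
  map_add' s t := by
    simp only [Prod.fst_add, Prod.snd_add]
    push_cast
    ring

lemma weight_apply (m n : ℤ) (s : ℕ × ℕ) : weight m n s = m * s.1 + n * s.2 := rfl

lemma le_or_le_of_weight_neg_le {m n : ℕ} (hm : 0 < m) (hn : 0 < n) {p q : ℕ} {s : ℕ × ℕ}
    (hs : weight (-m) (-n) s ≤ -(m * p + n * q : ℕ)) : p ≤ s.1 ∨ q ≤ s.2 := by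
  by_contra! h
  rw [weight_apply] at hs
  have hi := mul_lt_mul_of_pos_left h.1 hm
  have hj := mul_lt_mul_of_pos_left h.2 hn
  zify at hi hj
  push_cast at hs
  linarith

lemma weight_neg_nonpos (m n : ℕ) (s : ℕ × ℕ) : weight (-m) (-n) s ≤ 0 := by
  rw [weight_apply]
  have : (0 : ℤ) ≤ m * s.1 + n * s.2 := by positivity
  linarith

variable [Nontrivial k] {α β a b : ℕ}

lemma finrank_quotient_polyF_polyG (h : a * b < (α + 1) * (β + 1)) :
    Module.finrank k (k[ℕ × ℕ] ⧸ Ideal.span {polyF k α b, polyG k β a}) =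
      (α + 1) * (β + 1) := by
  zify at h
  let w := weight (b + β + 1) (α + 1 + a)
  have hF : HasLead w (polyF k α b) (α + 1, 0) := by
    rw [polyF, add_comm (single (α, 0) 1)]
    apply hasLead_single_add_single_add_single <;> simp only [w, weight_apply] <;> push_cast <;>
      linarith
  have hG : HasLead w (polyG k β a) (0, β + 1) := by
    rw [polyG, add_comm (single (0, β) 1)]
    apply hasLead_single_add_single_add_single <;> simp only [w, weight_apply] <;> push_cast <;>
      linarith
  have hw (s : ℕ × ℕ) : ¬ w s ≤ -1 := by
    have : 0 ≤ w s := by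
      rw [weight_apply]
      positivity
    omega
  have hbot : (⊥ : Ideal k[ℕ × ℕ]).restrictScalars k = weightLE k w (-1) := by
    simp [weightLE, supported_eq_span_single, hw]
  have hcount := finrank_quotient_span_pair_sup α.succ_pos β.succ_pos hF hG hbot
    fun s hs => (hw s hs).elim
  rwa [sup_bot_eq] at hcount

lemma finrank_quotient_polyF_polyG_sup_weightIdeal (hα : 0 < α) (hβ : 0 < β)
    (h : α * β < a * b) {c : ℤ}
    (hc : ∀ s, weight (-(b + β : ℕ)) (-(α + a : ℕ)) s ≤ c → α ≤ s.1 ∨ β ≤ s.2) :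
    Module.finrank k (k[ℕ × ℕ] ⧸ Ideal.span {polyF k α b, polyG k β a} ⊔
      weightIdeal k (weight_neg_nonpos (b + β) (α + a)) c) = α * β := by
  zify at h
  refine finrank_quotient_span_pair_sup hα hβ ?_ ?_ rfl hc
  · apply hasLead_single_add_single_add_single <;> simp only [weight_apply] <;> push_cast <;>
      linarith
  · apply hasLead_single_add_single_add_single <;> simp only [weight_apply] <;> push_cast <;>
      linarith

end Weights

section Origin

lemma pow_mem_of_mul_pow_mem {A : Type*} [CommRing A] {K : Ideal A} {x y : A} {p b n : ℕ}
    (hp : 0 < p) (hK : x ^ p + x ^ (p + 1) + y ^ b ∈ K) (hxy : (x * y) ^ n ∈ K) :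
    y ^ ((b + 1) * n) ∈ K := by
  obtain ⟨p, rfl⟩ := Nat.exists_eq_add_one.2 hp
  obtain ⟨c, hc⟩ : ∃ c, y ^ (b + 1) - c * (x * y) ∈ K := by
    refine ⟨-(x ^ p * (1 + x)), ?_⟩
    convert K.mul_mem_left y hK using 1
    ring
  have hpow : (y ^ (b + 1)) ^ n - (c * (x * y)) ^ n ∈ K :=
    K.mem_of_dvd (sub_dvd_pow_sub_pow _ _ n) hc
  rw [pow_mul, ← sub_add_cancel ((y ^ (b + 1)) ^ n) ((c * (x * y)) ^ n)]
  exact K.add_mem hpow (mul_pow c (x * y) n ▸ K.mul_mem_left _ hxy)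

lemma finrank_quotient_eq_of_le_of_le {k A : Type*} [Field k] [CommRing A] [Algebra k A]
    {I J K : Ideal A} (hIJ : I ≤ J) (hJK : J ≤ K) {d : ℕ} (hd : 0 < d)
    (hI : Module.finrank k (A ⧸ I) = d) (hK : Module.finrank k (A ⧸ K) = d) :
    Module.finrank k (A ⧸ J) = d := by
  have : Module.Finite k (A ⧸ I) := Module.finite_of_finrank_pos (hI ▸ hd)
  have hsIJ := Ideal.Quotient.factor_surjective hIJ
  have hsJK := Ideal.Quotient.factor_surjective hJK
  have : Module.Finite k (A ⧸ J) :=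
    .of_surjective (Ideal.Quotient.factorₐ k hIJ).toLinearMap hsIJ
  apply le_antisymm
  · rw [← hI]
    exact LinearMap.finrank_le_finrank_of_surjective
      (f := (Ideal.Quotient.factorₐ k hIJ).toLinearMap) hsIJ
  · rw [← hK]
    exact LinearMap.finrank_le_finrank_of_surjective
      (f := (Ideal.Quotient.factorₐ k hJK).toLinearMap) hsJK

lemma single_mem_of_polyF_mem_of_polyG_mem {k : Type*} [CommRing k] {α β a b n : ℕ}
    (hα : 0 < α) (hβ : 0 < β) {K : Ideal k[ℕ × ℕ]} (hF : polyF k α b ∈ K)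
    (hG : polyG k β a ∈ K) (he : single (1, 1) 1 ^ n ∈ K) {s : ℕ × ℕ}
    (hs : (a + 1) * n ≤ s.1 ∨ (b + 1) * n ≤ s.2) : single s 1 ∈ K := by
  have hxy : (single (1, 0) 1 * single (0, 1) 1 : k[ℕ × ℕ]) ^ n ∈ K := by
    simpa [single_mul_single] using he
  rcases hs with hs | hs
  · have hx : single ((a + 1) * n, 0) 1 ∈ K := by
      rw [mul_comm] at hxy
      simpa [single_pow] using
        pow_mem_of_mul_pow_mem hβ (by simpa [polyG, single_pow] using hG) hxy
    exact single_mem_of_le (Prod.le_def.2 ⟨hs, Nat.zero_le _⟩) hx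
  · have hy : single (0, (b + 1) * n) 1 ∈ K := by
      simpa [single_pow] using
        pow_mem_of_mul_pow_mem hα (by simpa [polyF, single_pow] using hF) hxy
    exact single_mem_of_le (Prod.le_def.2 ⟨Nat.zero_le _, hs⟩) hy

lemma finrank_quotient_polyF_polyG_sup_span_pow {k : Type*} [Field k] {α β a b n : ℕ}
    (hα : 0 < α) (hβ : 0 < β) (h : α * β < a * b) (hn : α + β ≤ n) :
    Module.finrank k (k[ℕ × ℕ] ⧸ Ideal.span {polyF k α b, polyG k β a} ⊔
      Ideal.span {single (1, 1) 1 ^ n}) = α * β := by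
  set J := Ideal.span {polyF k α b, polyG k β a}
  let W (p q : ℕ) : Ideal k[ℕ × ℕ] := weightIdeal k (weight_neg_nonpos (b + β) (α + a))
    (-((b + β) * p + (α + a) * q : ℕ))
  have hcount {p q : ℕ} (hp : α ≤ p) (hq : β ≤ q) :
      Module.finrank k (k[ℕ × ℕ] ⧸ J ⊔ W p q) = α * β :=
    finrank_quotient_polyF_polyG_sup_weightIdeal hα hβ h fun s hs =>
      (le_or_le_of_weight_neg_le (by omega) (by omega) hs).imp hp.trans hq.trans
  have hlower : J ⊔ W ((a + 1) * n) ((b + 1) * n) ≤ J ⊔ Ideal.span {single (1, 1) 1 ^ n} := by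
    refine sup_le le_sup_left (weightIdeal_le fun s hs => ?_)
    exact single_mem_of_polyF_mem_of_polyG_mem hα hβ
      (Ideal.mem_sup_left (Ideal.subset_span (by simp)))
      (Ideal.mem_sup_left (Ideal.subset_span (by simp)))
      (Ideal.mem_sup_right (Ideal.mem_span_singleton_self _))
      (le_or_le_of_weight_neg_le (by omega) (by omega) hs)
  have hupper : J ⊔ Ideal.span {single (1, 1) 1 ^ n} ≤ J ⊔ W α β := by
    refine sup_le_sup_left ((Ideal.span_singleton_le_iff_mem _).2 ?_) J
    suffices single (1, 1) 1 ^ n ∈ weightLE k _ _ from this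
    rw [single_pow, one_pow]
    refine single_mem_weightLE ?_ 1
    rw [weight_apply]
    simp only [Prod.smul_mk, smul_eq_mul, mul_one]
    have hx : (b + β) * α ≤ (b + β) * n := Nat.mul_le_mul_left _ (by omega)
    have hy : (α + a) * β ≤ (α + a) * n := Nat.mul_le_mul_left _ (by omega)
    zify at hx hy
    push_cast
    linarith
  exact finrank_quotient_eq_of_le_of_le hlower hupper (by positivity)
    (hcount (by nlinarith) (by nlinarith)) (hcount le_rfl le_rfl)

end Origin

theorem finrank_quotient_span_add_mul {k : Type*} [Field k] {α β a b : ℕ} (hα : 0 < α)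
    (hβ : 0 < β) (hab₁ : α * β < a * b) (hab₂ : a * b < (α + 1) * (β + 1)) :
    Module.finrank k (k[ℤ × ℤ] ⧸ (Ideal.span
      {1 + single (1, 0) 1 + single (-(α : ℤ), (b : ℤ)) 1,
        1 + single (0, 1) 1 + single ((a : ℤ), -(β : ℤ)) 1} : Ideal k[ℤ × ℤ])) + α * β =
      (α + 1) * (β + 1) := by
  have htotal := finrank_quotient_polyF_polyG (k := k) hab₂
  have : Module.Finite k (k[ℕ × ℕ] ⧸ Ideal.span {polyF k α b, polyG k β a}) :=
    Module.finite_of_finrank_pos (htotal ▸ by positivity)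
  obtain ⟨n, hfitting, hn⟩ := ((eventually_finrank_quotient_map_add_finrank_quotient_sup k
    (L := k[ℤ × ℤ]) (single (1, 1) 1) (Ideal.span {polyF k α b, polyG k β a})).and
      (eventually_ge_atTop (α + β))).exists
  rw [← htotal, ← hfitting, map_span_polyF_polyG,
    finrank_quotient_polyF_polyG_sup_span_pow hα hβ hab₁ hn]

end BivariateBicycle

open AddMonoidAlgebra in
theorem bb_index_regime_middle_general {k : Type*} [Field k] (α β a b : ℤ) (hα : 1 ≤ α)
    (hβ : 1 ≤ β) (ha : 0 ≤ a) (hb : 0 ≤ b) (hab1 : α * β < a * b)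
    (hab2 : a * b < (α + 1) * (β + 1)) :
    (Module.finrank k (k[ℤ × ℤ] ⧸ (Ideal.span
      {1 + single (1, 0) 1 + single (-α, b) 1, 1 + single (0, 1) 1 + single (a, -β) 1} :
        Ideal k[ℤ × ℤ])) : ℤ) = α + β + 1 := by
  lift α to ℕ using by omega
  lift β to ℕ using by omega
  lift a to ℕ using ha
  lift b to ℕ using hb
  have hcount := BivariateBicycle.finrank_quotient_span_add_mul (k := k) (by omega : 0 < α)
    (by omega : 0 < β) (mod_cast hab1) (mod_cast hab2)
  zify at hcount
  linarith

/-- If `α, β ≥ 1`, `a, b ≥ 0` and `α·β < a·b < (α+1)·(β+1)`, the topological index of BB(ᾱ, β̄, a, b) is `Q = α + β + 1`. -/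
theorem bb_index_regime_middle (α β a b : ℤ) (hα : 1 ≤ α) (hβ : 1 ≤ β) (ha : 0 ≤ a) (hb : 0 ≤ b) (hab1 : α * β < a * b) (hab2 : a * b < (α + 1) * (β + 1)) :
    (Module.finrank (ZMod 2)
      (LaurentR ⧸ Ideal.span ({fBB α b, gBB β a} : Set LaurentR)) : ℤ) = α + β + 1 :=
  bb_index_regime_middle_general α β a b hα hβ ha hb hab1 hab2
end
end

section
/- Let α, β, a, b be integers with α ≥ 1, β ≥ 1 and a·b < 0 (i.e., a > 0 > b or a < 0 < b). Then the topological index of the BB(ᾱ, β̄, a, b) code, with f = 1 + x + x^{-α} y^{b} and g = 1 + y + y^{-β} x^{a} in R, is Q = dim_{F₂} R ⧸ (f, g) = (α + 1)·(β + 1) − a·b. -/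
noncomputable section

/-!
By the symmetry exchanging `x` and `y`, let `a = n > 0` and `b = -B < 0`. Clearing denominators,
`R ⧸ (f, g)` becomes the quotient of the curve ring `S = F[x, y] / (x ^ n + y ^ β * (y + 1))` by
`h = x ^ α * (1 + x) * y ^ B + 1`, because for `α, B ≥ 1` the relation `h = 0` already makes `x` and
`y` invertible. Since `S` is a domain (Eisenstein at `y + 1`), free over `F[y]`, the dimension of
`S ⧸ (h)` is the degree of the norm of `h`. This degree is computed at `y = ∞`: let `v` be a
valuation, trivial on `F`, of an algebraic closure of `F(y)` such that `v y > 1`. An eigenvalue `r`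
of multiplication by `x` satisfies `r ^ n = -y ^ β * (y + 1)`, so `v r > 1` and the leading term
`r ^ (α + 1) * y ^ B` dominates the corresponding eigenvalue of `h`; the product over all `n`
eigenvalues has degree `(α + 1) * (β + 1) + n * B`.
-/

open Polynomial

section Numerator

variable {A A' : Type*} [Semiring A] [Semiring A']

/-- The numerator `x ^ α * y ^ B * f` of the BB polynomial `f = 1 + x + x ^ (-α) * y ^ (-B)`,
evaluated at `x` and `y` (in this order where they do not commute). -/
def bbNumerator (α B : ℕ) (x y : A) : A := x ^ α * (1 + x) * y ^ B + 1

theorem map_bbNumerator {G : Type*} [FunLike G A A'] [RingHomClass G A A'] (φ : G) (α B : ℕ)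
    (x y : A) : φ (bbNumerator α B x y) = bbNumerator α B (φ x) (φ y) := by
  simp only [bbNumerator, map_add, map_mul, map_pow, map_one]

theorem isUnit_and_isUnit_of_bbNumerator_eq_zero {T : Type*} [CommRing T] {α B : ℕ} {x y : T}
    (hα : α ≠ 0) (hB : B ≠ 0) (h : bbNumerator α B x y = 0) : IsUnit x ∧ IsUnit y := by
  have hunit : IsUnit (x ^ α * (1 + x) * y ^ B) :=
    eq_neg_of_add_eq_zero_left h ▸ isUnit_one.neg
  exact ⟨(isUnit_pow_iff hα).mp (isUnit_of_mul_isUnit_left (isUnit_of_mul_isUnit_left hunit)),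
    (isUnit_pow_iff hB).mp (isUnit_of_mul_isUnit_right hunit)⟩

end Numerator

section Valuation

theorem exists_valuationSubring_isTrivialOn_one_lt {F K : Type*} [Field F] [Field K] [Algebra F K]
    {x : K} (hx : Transcendental F x) :
    ∃ V : ValuationSubring K, V.valuation.IsTrivialOn F ∧ 1 < V.valuation x := by
  have hxR : x ∉ (integralClosure F K).toSubring := fun h ↦ hx h.isAlgebraic
  have : IsIntegrallyClosedIn (integralClosure F K).toSubring K :=
    inferInstanceAs (IsIntegrallyClosedIn (integralClosure F K) K)
  obtain ⟨V, hV, hxV⟩ := Subring.exists_le_valuationSubring_of_isIntegrallyClosedIn hxR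
  refine ⟨V, ⟨fun c hc ↦ ?_⟩, lt_of_not_ge fun h ↦ hxV ((V.valuation_le_one_iff x).mp h)⟩
  have hmem (d : F) : V.valuation (algebraMap F K d) ≤ 1 :=
    (V.valuation_le_one_iff _).mpr (hV (isIntegral_algebraMap (R := F)))
  refine le_antisymm (hmem c) ?_
  simpa [one_le_inv₀, hc, zero_lt_iff, inv_le_one₀] using hmem c⁻¹

variable {K Γ ι : Type*} [Field K] [LinearOrderedCommGroupWithZero Γ]

theorem valuation_det_aeval_eq_pow_card [IsAlgClosed K] [Fintype ι] [DecidableEq ι]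
    (v : Valuation K Γ) (M : Matrix ι ι K) (p : K[X]) {γ : Γ}
    (h : ∀ r ∈ spectrum K M, v (p.eval r) = γ) : v (aeval M p).det = γ ^ Fintype.card ι := by
  cases isEmpty_or_nonempty ι
  · simp
  have hroot : ∀ r ∈ (aeval M p).charpoly.roots, v r = γ := by
    intro μ hμ
    rw [mem_roots (Matrix.charpoly_monic _).ne_zero, ← Matrix.mem_spectrum_iff_isRoot_charpoly,
      spectrum.map_polynomial_aeval_of_nonempty M p
        (spectrum.nonempty_of_isAlgClosed_of_finiteDimensional K M)] at hμ
    obtain ⟨r, hr, rfl⟩ := hμ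
    exact h r hr
  rw [Matrix.det_eq_prod_roots_charpoly, map_multiset_prod,
    Multiset.map_congr rfl hroot, Multiset.map_const', Multiset.prod_replicate,
    IsAlgClosed.card_roots_eq_natDegree, Matrix.charpoly_natDegree_eq_dim]

theorem pow_eq_of_mem_spectrum {A : Type*} [Ring A] [Algebra K A] {a : A} {n : ℕ} {c r : K}
    (ha : a ^ n = algebraMap K A c) (hr : r ∈ spectrum K a) : r ^ n = c := by
  have : Nontrivial A := not_subsingleton_iff_nontrivial.mp fun _ ↦ by
    simp [spectrum.of_subsingleton] at hr
  have hmem : r ^ n ∈ spectrum K (algebraMap K A c) := ha ▸ spectrum.pow_mem_pow a n hr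
  rwa [spectrum.scalar_eq, Set.mem_singleton_iff] at hmem

theorem valuation_bbNumerator (v : Valuation K Γ) {x y : K} (hx : 1 < v x) (hy : 1 ≤ v y)
    (α B : ℕ) : v (bbNumerator α B x y) = v x ^ (α + 1) * v y ^ B := by
  have h1x : v (1 + x) = v x := v.map_add_eq_of_lt_right (v.map_one.trans_lt hx)
  have hlead : v (x ^ α * (1 + x) * y ^ B) = v x ^ (α + 1) * v y ^ B := by
    simp only [map_mul, map_pow, h1x, pow_succ]
  rw [bbNumerator, v.map_add_eq_of_lt_left, hlead]
  rw [hlead, map_one]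
  exact one_lt_mul_of_lt_of_le (one_lt_pow₀ hx α.succ_ne_zero) (one_le_pow₀ hy)

theorem valuation_det_bbNumerator [IsAlgClosed K] [Fintype ι] [Nonempty ι]
    [DecidableEq ι] (v : Valuation K Γ) {M : Matrix ι ι K} {c y : K}
    (hM : M ^ Fintype.card ι = algebraMap K _ c) (hc : 1 < v c) (hy : 1 ≤ v y) (α B : ℕ) :
    v (bbNumerator α B M (algebraMap K _ y)).det =
      v c ^ (α + 1) * v y ^ (Fintype.card ι * B) := by
  obtain ⟨ρ, hρ⟩ := IsAlgClosed.exists_pow_nat_eq c (Fintype.card_pos (α := ι))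
  have hv (r : K) (hr : r ∈ spectrum K M) : v r = v ρ := by
    refine (pow_left_inj₀ zero_le zero_le (Fintype.card_ne_zero (α := ι))).mp ?_
    rw [← map_pow, ← map_pow, pow_eq_of_mem_spectrum hM hr, hρ]
  have hρ1 : 1 < v ρ := by
    rwa [← one_lt_pow_iff_of_nonneg zero_le (Fintype.card_ne_zero (α := ι)), ← map_pow, hρ]
  have hdet := valuation_det_aeval_eq_pow_card v M (bbNumerator α B X (C y))
    (γ := v ρ ^ (α + 1) * v y ^ B) fun r hr ↦ by
      rw [← coe_evalRingHom, map_bbNumerator, coe_evalRingHom, eval_X, eval_C,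
        valuation_bbNumerator v (hv r hr ▸ hρ1) hy, hv r hr]
  rw [map_bbNumerator, aeval_X, aeval_C] at hdet
  rw [hdet, mul_pow, ← hρ, map_pow, pow_right_comm, mul_comm (Fintype.card ι), pow_mul (v y)]

end Valuation

theorem exists_valuationSubring_valuation_eq_pow_natDegree {F K : Type*} [Field F] [Field K]
    [Algebra F K] [Algebra F[X] K] [IsScalarTower F F[X] K]
    (hinj : Function.Injective (algebraMap F[X] K)) :
    ∃ V : ValuationSubring K, 1 < V.valuation (algebraMap F[X] K X) ∧ ∀ p : F[X], p ≠ 0 →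
      V.valuation (algebraMap F[X] K p) = V.valuation (algebraMap F[X] K X) ^ p.natDegree := by
  obtain ⟨V, hVF, hV⟩ := exists_valuationSubring_isTrivialOn_one_lt
    ((transcendental_algebraMap_iff hinj).mpr (transcendental_X F))
  refine ⟨V, hV, fun p hp ↦ ?_⟩
  rw [← valuation_aeval_eq_valuation_X_pow_natDegree_of_one_lt_valuation_X _ hV hp,
    aeval_algebraMap_apply, aeval_X_left_apply]

theorem natDegree_norm_bbNumerator {F S ι : Type*} [Field F] [CommRing S]
    [Algebra F[X] S] [Nontrivial S] [Fintype ι] (b : Module.Basis ι F[X] S) {x : S} {c : F[X]}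
    (hc : c.natDegree ≠ 0) (hx : x ^ Fintype.card ι = algebraMap F[X] S c) (α B : ℕ) :
    (Algebra.norm F[X] (bbNumerator α B x (algebraMap F[X] S X))).natDegree =
      (α + 1) * c.natDegree + Fintype.card ι * B := by
  classical
  have := b.index_nonempty
  let K := AlgebraicClosure (RatFunc F)
  have hinj : Function.Injective (algebraMap F[X] K) := by
    rw [IsScalarTower.algebraMap_eq F[X] (RatFunc F) K]
    exact (algebraMap (RatFunc F) K).injective.comp (RatFunc.algebraMap_injective F)
  obtain ⟨V, hy, hV⟩ := exists_valuationSubring_valuation_eq_pow_natDegree hinj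
  let φ : S →+* Matrix ι ι K := (algebraMap F[X] K).mapMatrix.comp (Algebra.leftMulMatrix b)
  have hφ (p : F[X]) : φ (algebraMap F[X] S p) = algebraMap K _ (algebraMap F[X] K p) := by
    simp [φ, AlgHom.commutes, Matrix.algebraMap_eq_diagonal, Matrix.diagonal_map]
  have hnorm (s : S) : algebraMap F[X] K (Algebra.norm F[X] s) = (φ s).det := by
    rw [Algebra.norm_eq_matrix_det b, RingHom.map_det]
    rfl
  have hM : φ x ^ Fintype.card ι = algebraMap K _ (algebraMap F[X] K c) := by
    rw [← map_pow, hx, hφ]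
  have hc0 : c ≠ 0 := by
    rintro rfl
    exact hc natDegree_zero
  have hVc : 1 < V.valuation (algebraMap F[X] K c) := by
    rw [hV c hc0]
    exact one_lt_pow₀ hy hc
  set N := Algebra.norm F[X] (bbNumerator α B x (algebraMap F[X] S X)) with hN
  have hvN : V.valuation (algebraMap F[X] K N) = V.valuation (algebraMap F[X] K X) ^
      ((α + 1) * c.natDegree + Fintype.card ι * B) := by
    rw [hN, hnorm, map_bbNumerator, hφ, valuation_det_bbNumerator _ hM hVc hy.le, hV c hc0,
      ← pow_mul, ← pow_add, mul_comm c.natDegree]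
  have hy0 : 0 < V.valuation (algebraMap F[X] K X) := zero_lt_one.trans hy
  have hN0 : N ≠ 0 := by
    intro h
    rw [h, map_zero, map_zero] at hvN
    exact pow_ne_zero _ hy0.ne' hvN.symm
  exact pow_right_injective₀ hy0 hy.ne' ((hV N hN0).symm.trans hvN)

theorem irreducible_X_pow_sub_C_of_prime {R : Type*} [CommRing R] [IsDomain R] {p c : R}
    (hp : Prime p) (hpc : p ∣ c) (hpc' : ¬ p ^ 2 ∣ c) {n : ℕ} (hn : n ≠ 0) :
    Irreducible (X ^ n - C c : R[X]) := by
  have hP := (Ideal.span_singleton_prime hp.ne_zero).mpr hp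
  have hmonic := monic_X_pow_sub_C c hn
  have hdeg : (X ^ n - C c).natDegree = n := natDegree_X_pow_sub_C
  refine IsEisensteinAt.irreducible (𝓟 := Ideal.span {p}) ⟨?_, fun {m} hm ↦ ?_, ?_⟩ hP
    hmonic.isPrimitive (hdeg.symm ▸ Nat.pos_of_ne_zero hn)
  · rw [hmonic.leadingCoeff]
    exact hP.one_notMem
  · rw [hdeg] at hm
    rw [coeff_sub, coeff_X_pow, if_neg hm.ne, zero_sub, neg_mem_iff, coeff_C]
    split_ifs
    · exact Ideal.mem_span_singleton.mpr hpc
    · exact zero_mem _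
  · rw [coeff_sub, coeff_X_pow, if_neg hn.symm, zero_sub, coeff_C_zero, neg_mem_iff,
      Ideal.span_singleton_pow, Ideal.mem_span_singleton]
    exact hpc'

theorem finrank_quotient_span_bbNumerator {F S ι : Type*} [Field F] [CommRing S]
    [IsDomain S] [Algebra F[X] S] [Algebra F S] [IsScalarTower F F[X] S] [Fintype ι]
    (b : Module.Basis ι F[X] S) {x : S} {c : F[X]}
    (hc : c.natDegree ≠ 0) (hx : x ^ Fintype.card ι = algebraMap F[X] S c) (α B : ℕ) :
    Module.finrank F (S ⧸ Ideal.span {bbNumerator α B x (algebraMap F[X] S X)}) =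
      (α + 1) * c.natDegree + Fintype.card ι * B := by
  have hnorm := natDegree_norm_bbNumerator b hc hx α B
  rw [finrank_quotient_span_eq_natDegree_norm b, hnorm]
  intro h
  have := Module.Free.of_basis b
  have := Module.Finite.of_basis b
  rw [h, Algebra.norm_zero, natDegree_zero] at hnorm
  exact mul_ne_zero α.succ_ne_zero hc (by lia)

theorem natDegree_neg_X_pow_mul_X_add_one {R : Type*} [Ring R] [Nontrivial R] (β : ℕ) :
    (-(X ^ β * (X + 1)) : R[X]).natDegree = β + 1 := by
  rw [natDegree_neg, ← C_1, (monic_X_pow β).natDegree_mul (monic_X_add_C 1), natDegree_X_pow,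
    natDegree_X_add_C]

theorem irreducible_X_pow_sub_C_neg_X_pow_mul_X_add_one {F : Type*} [Field F] (β : ℕ) {n : ℕ}
    (hn : n ≠ 0) : Irreducible (X ^ n - C (-(X ^ β * (X + 1))) : F[X][X]) := by
  have hprime : Prime (X + 1 : F[X]) := by simpa using prime_X_sub_C (-1 : F)
  refine irreducible_X_pow_sub_C_of_prime hprime (dvd_mul_left _ _).neg_right ?_ hn
  rw [dvd_neg, sq, mul_dvd_mul_iff_right hprime.ne_zero]
  intro h
  have hroot : IsRoot (X : F[X]) (-1) :=
    dvd_iff_isRoot.mp (by simpa using hprime.dvd_of_dvd_pow h)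
  simp at hroot

/-- The coordinate ring `F[x, y] / (x ^ n + y ^ β * (y + 1))` of the affine curve cut out by the
second BB polynomial, presented as an extension of `F[y]`. -/
abbrev BBCurve (F : Type*) [Field F] (β n : ℕ) : Type _ :=
  AdjoinRoot (X ^ n - C (-(X ^ β * (X + 1))) : F[X][X])

namespace BBCurve

variable (F : Type*) [Field F] (β n : ℕ)

/-- The coordinate function `x` on the curve. -/
abbrev x : BBCurve F β n := AdjoinRoot.root _

/-- The coordinate function `y` on the curve. -/
abbrev y : BBCurve F β n := algebraMap F[X] _ X

theorem x_pow : x F β n ^ n = algebraMap F[X] _ (-(X ^ β * (X + 1))) := by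
  have h := AdjoinRoot.eval₂_root (X ^ n - C (-(X ^ β * (X + 1))) : F[X][X])
  rwa [eval₂_sub, eval₂_X_pow, eval₂_C, sub_eq_zero] at h

/-- The ideal of the curve ring generated by the first BB polynomial, cleared of denominators. -/
abbrev fIdeal (α B : ℕ) : Ideal (BBCurve F β n) :=
  Ideal.span {bbNumerator α B (x F β n) (y F β n)}

variable {n} in
theorem finrank_quotient_fIdeal (hn : n ≠ 0) (α B : ℕ) :
    Module.finrank F (BBCurve F β n ⧸ fIdeal F β n α B) = (α + 1) * (β + 1) + n * B := by
  have : IsDomain (BBCurve F β n) :=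
    AdjoinRoot.isDomain_of_prime (irreducible_X_pow_sub_C_neg_X_pow_mul_X_add_one β hn).prime
  let pb := AdjoinRoot.powerBasis' (monic_X_pow_sub_C (-(X ^ β * (X + 1)) : F[X]) hn)
  have hcard : Fintype.card (Fin pb.dim) = n := by
    rw [Fintype.card_fin, AdjoinRoot.powerBasis'_dim, natDegree_X_pow_sub_C]
  have hdeg := natDegree_neg_X_pow_mul_X_add_one (R := F) β
  have hfinrank := finrank_quotient_span_bbNumerator pb.basis
    (hdeg.trans_ne β.succ_ne_zero) (by rw [hcard]; exact x_pow F β n) α B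
  rwa [hcard, hdeg] at hfinrank

variable {F β n}

theorem bbNumerator_mk_eq_zero (α B : ℕ) :
    bbNumerator α B (Ideal.Quotient.mk (fIdeal F β n α B) (x F β n))
      (Ideal.Quotient.mk (fIdeal F β n α B) (y F β n)) = 0 := by
  rw [← map_bbNumerator, Ideal.Quotient.eq_zero_iff_mem]
  exact Ideal.mem_span_singleton_self _

theorem x_pow_add_eq_zero : x F β n ^ n + y F β n ^ β * (y F β n + 1) = 0 := by
  refine add_eq_zero_iff_eq_neg.mpr ((x_pow F β n).trans ?_)
  simp only [map_neg, map_mul, map_pow, map_add, map_one]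

variable {T : Type*} [CommRing T] [Algebra F T]

/-- The morphism out of the coordinate ring given by a point of the curve. -/
def lift {u v : T} (h : u ^ n + v ^ β * (v + 1) = 0) : BBCurve F β n →ₐ[F] T :=
  AdjoinRoot.liftAlgHom _ (aeval v) u <| by
    rw [eval₂_sub, eval₂_X_pow, eval₂_C]
    simpa using h

theorem lift_x {u v : T} (h : u ^ n + v ^ β * (v + 1) = 0) : lift h (x F β n) = u :=
  AdjoinRoot.liftAlgHom_root ..

theorem lift_y {u v : T} (h : u ^ n + v ^ β * (v + 1) = 0) : lift h (y F β n) = v :=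
  (AdjoinRoot.liftAlgHom_of ..).trans (aeval_X v)

theorem algHom_ext {φ ψ : BBCurve F β n →ₐ[F] T} (hx : φ (x F β n) = ψ (x F β n))
    (hy : φ (y F β n) = ψ (y F β n)) : φ = ψ :=
  AdjoinRoot.algHom_ext' (Polynomial.algHom_ext hy) hx

end BBCurve

section Laurent

open AddMonoidAlgebra (single)

variable {k T : Type*} [CommRing k] [CommRing T] [Algebra k T]

variable (k) in
/-- Evaluation of Laurent polynomials at a pair of units. -/
def laurentEval (u v : Tˣ) : AddMonoidAlgebra k (ℤ × ℤ) →ₐ[k] T :=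
  AddMonoidAlgebra.lift k T (ℤ × ℤ) <| (Units.coeHom T).comp <|
    ((zpowersHom Tˣ u).coprod (zpowersHom Tˣ v)).comp
      (MulEquiv.prodMultiplicative ℤ ℤ).toMonoidHom

theorem laurentEval_single (u v : Tˣ) (i j : ℤ) :
    laurentEval k u v (single (i, j) 1) = ↑(u ^ i * v ^ j) := by
  simp [laurentEval]

theorem exists_eq_laurentEval (φ : AddMonoidAlgebra k (ℤ × ℤ) →ₐ[k] T) :
    ∃ u v : Tˣ, φ = laurentEval k u v := by
  let χ : Multiplicative (ℤ × ℤ) →* Tˣ :=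
    (φ : _ →* T).comp (AddMonoidAlgebra.of k (ℤ × ℤ)) |>.toHomUnits
  refine ⟨χ (.ofAdd (1, 0)), χ (.ofAdd (0, 1)),
    AddMonoidAlgebra.algHom_ext (fun ⟨i, j⟩ ↦ ?_) (by ext)⟩
  rw [laurentEval_single, ← map_zpow χ, ← map_zpow χ, ← map_mul χ, ← ofAdd_zsmul, ← ofAdd_zsmul,
    ← ofAdd_add]
  simp [χ]

theorem laurent_algHom_ext {φ ψ : AddMonoidAlgebra k (ℤ × ℤ) →ₐ[k] T}
    (hx : φ (single (1, 0) 1) = ψ (single (1, 0) 1))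
    (hy : φ (single (0, 1) 1) = ψ (single (0, 1) 1)) : φ = ψ := by
  obtain ⟨u, v, rfl⟩ := exists_eq_laurentEval φ
  obtain ⟨u', v', rfl⟩ := exists_eq_laurentEval ψ
  simp only [laurentEval_single, zpow_one, zpow_zero, mul_one, one_mul, Units.val_inj] at hx hy
  rw [hx, hy]

variable (k) in
/-- The ideal `(f, g)` generated by the BB polynomials, over an arbitrary ring of coefficients. -/
def bbIdeal (α β a b : ℤ) : Ideal (AddMonoidAlgebra k (ℤ × ℤ)) :=
  Ideal.span {1 + single (1, 0) 1 + single (-α, b) 1, 1 + single (0, 1) 1 + single (a, -β) 1}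

theorem one_add_add_zpow_neg_mul_zpow_neg_eq_zero_iff {u v : Tˣ} {α B : ℕ} :
    1 + (u : T) + ↑(u ^ (-α : ℤ) * v ^ (-B : ℤ)) = 0 ↔ bbNumerator α B (u : T) v = 0 := by
  have hinv : (u : T) ^ α * (v : T) ^ B * ↑(u ^ (-α : ℤ) * v ^ (-B : ℤ)) = 1 := by
    norm_cast
    rw [mul_mul_mul_comm]
    simp
  rw [← (u ^ α * v ^ B).isUnit.mul_right_eq_zero, mul_add, Units.val_mul, Units.val_pow_eq_pow_val,
    Units.val_pow_eq_pow_val, hinv, mul_right_comm, bbNumerator]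

theorem one_add_add_zpow_mul_zpow_neg_eq_zero_iff {u v : Tˣ} {β n : ℕ} :
    1 + (v : T) + ↑(u ^ (n : ℤ) * v ^ (-β : ℤ)) = 0 ↔
      (u : T) ^ n + (v : T) ^ β * (v + 1) = 0 := by
  have hinv : (v : T) ^ β * ↑(u ^ (n : ℤ) * v ^ (-β : ℤ)) = (u : T) ^ n := by
    norm_cast
    simp [mul_left_comm]
  rw [← (v ^ β).isUnit.mul_right_eq_zero, mul_add, Units.val_pow_eq_pow_val, hinv, add_comm,
    add_comm 1]

theorem bbIdeal_le_ker_laurentEval_iff {u v : Tˣ} {α β n B : ℕ} :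
    bbIdeal k α β n (-B) ≤ RingHom.ker (laurentEval k u v) ↔
      bbNumerator α B (u : T) v = 0 ∧ (u : T) ^ n + (v : T) ^ β * (v + 1) = 0 := by
  rw [← one_add_add_zpow_neg_mul_zpow_neg_eq_zero_iff, ← one_add_add_zpow_mul_zpow_neg_eq_zero_iff,
    bbIdeal, Ideal.span_le, Set.pair_subset_iff]
  simp [RingHom.mem_ker, laurentEval_single]

theorem finrank_quotient_bbIdeal_swap (α β a b : ℤ) :
    Module.finrank k (AddMonoidAlgebra k (ℤ × ℤ) ⧸ bbIdeal k α β a b) =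
      Module.finrank k (AddMonoidAlgebra k (ℤ × ℤ) ⧸ bbIdeal k β α b a) := by
  let σ : AddMonoidAlgebra k (ℤ × ℤ) ≃ₐ[k] AddMonoidAlgebra k (ℤ × ℤ) :=
    AddMonoidAlgebra.domCongr k k AddEquiv.prodComm
  have hσ (i j : ℤ) : σ (single (i, j) 1) = single (j, i) 1 := by simp [σ]
  have hmap : bbIdeal k β α b a =
      (bbIdeal k α β a b).map (σ : _ →+* AddMonoidAlgebra k (ℤ × ℤ)) := by
    rw [bbIdeal, bbIdeal, Ideal.map_span, Set.image_pair, Set.pair_comm]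
    simp [hσ]
  exact (Ideal.quotientEquivAlg _ _ σ hmap).toLinearEquiv.finrank_eq

end Laurent

section Index

variable {F : Type*} [Field F] {α β B n : ℕ}

theorem nonempty_algEquiv_quotient_bbIdeal (hα : α ≠ 0) (hB : B ≠ 0) :
    Nonempty ((AddMonoidAlgebra F (ℤ × ℤ) ⧸ bbIdeal F α β n (-B)) ≃ₐ[F]
      BBCurve F β n ⧸ BBCurve.fIdeal F β n α B) := by
  have hh := BBCurve.bbNumerator_mk_eq_zero (F := F) (β := β) (n := n) α B
  obtain ⟨⟨u, hu⟩, ⟨v, hv⟩⟩ := isUnit_and_isUnit_of_bbNumerator_eq_zero hα hB hh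
  obtain ⟨u', v', hmk⟩ := exists_eq_laurentEval (Ideal.Quotient.mkₐ F (bbIdeal F α β n (-B)))
  obtain ⟨hf, hg⟩ := bbIdeal_le_ker_laurentEval_iff.mp
    (hmk ▸ (Ideal.Quotient.mkₐ_ker F (bbIdeal F α β n (-B))).ge)
  have hu' : Ideal.Quotient.mk (bbIdeal F α β n (-B)) (.single (1, 0) 1) = u' := by
    simpa [laurentEval_single] using DFunLike.congr_fun hmk (.single (1, 0) 1)
  have hv' : Ideal.Quotient.mk (bbIdeal F α β n (-B)) (.single (0, 1) 1) = v' := by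
    simpa [laurentEval_single] using DFunLike.congr_fun hmk (.single (0, 1) 1)
  have hφ : bbIdeal F α β n (-B) ≤ RingHom.ker (laurentEval F u v) :=
    bbIdeal_le_ker_laurentEval_iff.mpr <| by
      rw [hu, hv]
      exact ⟨hh, congrArg (Ideal.Quotient.mk _) BBCurve.x_pow_add_eq_zero⟩
  have hψ : BBCurve.fIdeal F β n α B ≤ RingHom.ker (BBCurve.lift hg) := by
    simpa [Ideal.span_singleton_le_iff_mem, map_bbNumerator,
      BBCurve.lift_x, BBCurve.lift_y] using hf
  let toCurve := Ideal.Quotient.liftₐ _ (laurentEval F u v) fun _ h ↦ hφ h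
  let ofCurve := Ideal.Quotient.liftₐ _ (BBCurve.lift hg) fun _ h ↦ hψ h
  have toCurve_u' : toCurve u' = u := by
    rw [← hu']
    exact (laurentEval_single u v 1 0).trans (by simp)
  have toCurve_v' : toCurve v' = v := by
    rw [← hv']
    exact (laurentEval_single u v 0 1).trans (by simp)
  have ofCurve_u : ofCurve u = u' := hu ▸ BBCurve.lift_x hg
  have ofCurve_v : ofCurve v = v' := hv ▸ BBCurve.lift_y hg
  refine ⟨.ofAlgHom toCurve ofCurve (Ideal.Quotient.algHom_ext _ (BBCurve.algHom_ext ?_ ?_))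
    (Ideal.Quotient.algHom_ext _ (laurent_algHom_ext ?_ ?_))⟩
  · change toCurve (ofCurve (Ideal.Quotient.mk _ (BBCurve.x F β n))) = Ideal.Quotient.mk _ _
    rw [← hu, ofCurve_u, toCurve_u']
  · change toCurve (ofCurve (Ideal.Quotient.mk _ (BBCurve.y F β n))) = Ideal.Quotient.mk _ _
    rw [← hv, ofCurve_v, toCurve_v']
  · change ofCurve (toCurve (Ideal.Quotient.mk _ _)) = Ideal.Quotient.mk _ _
    rw [hu', toCurve_u', ofCurve_u]
  · change ofCurve (toCurve (Ideal.Quotient.mk _ _)) = Ideal.Quotient.mk _ _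
    rw [hv', toCurve_v', ofCurve_v]

theorem finrank_quotient_bbIdeal (hα : α ≠ 0) (hB : B ≠ 0) (hn : n ≠ 0) :
    Module.finrank F (AddMonoidAlgebra F (ℤ × ℤ) ⧸ bbIdeal F α β n (-B)) =
      (α + 1) * (β + 1) + n * B := by
  obtain ⟨e⟩ := nonempty_algEquiv_quotient_bbIdeal (F := F) (β := β) (n := n) hα hB
  rw [e.toLinearEquiv.finrank_eq, BBCurve.finrank_quotient_fIdeal F β hn]

end Index

theorem bb_index_regime_mixed_sign_general (F : Type*) [Field F] (α β a b : ℤ) (hα : 1 ≤ α)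
    (hβ : 1 ≤ β) (hab : a * b < 0) :
    (Module.finrank F (AddMonoidAlgebra F (ℤ × ℤ) ⧸ bbIdeal F α β a b) : ℤ) =
      (α + 1) * (β + 1) - a * b := by
  wlog ha : 0 < a generalizing α β a b
  · have hb : 0 < b := pos_of_mul_neg_right hab (not_lt.mp ha)
    rw [finrank_quotient_bbIdeal_swap, this β α b a hβ hα (mul_comm a b ▸ hab) hb]
    ring
  obtain ⟨B, rfl⟩ : ∃ B : ℕ, b = -B :=
    Int.exists_eq_neg_ofNat (neg_of_mul_neg_right hab ha.le).le
  lift α to ℕ using by omega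
  lift β to ℕ using by omega
  lift a to ℕ using ha.le
  have hB : B ≠ 0 := by rintro rfl; simp at hab
  rw [finrank_quotient_bbIdeal (by omega) hB (by omega)]
  push_cast
  ring

/-- If `α, β ≥ 1` and `a·b < 0`, the topological index of BB(ᾱ, β̄, a, b) is `Q = (α+1)·(β+1) − a·b`. -/
theorem bb_index_regime_mixed_sign (α β a b : ℤ) (hα : 1 ≤ α) (hβ : 1 ≤ β) (hab : a * b < 0) :
    (Module.finrank (ZMod 2)
      (LaurentR ⧸ Ideal.span ({fBB α b, gBB β a} : Set LaurentR)) : ℤ) = (α + 1) * (β + 1) - a * b :=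
  bb_index_regime_mixed_sign_general (ZMod 2) α β a b hα hβ hab
end
end
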